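/- Suppose d ∈ ℤ_pˣ is not a square in ℚ_p, and let β : ℕ → ℝ be determined by β(0) = 1, β(1) = λ/(q+1), and q·β(k+2) − λ·β(k+1) + β(k) = 0 for all k. Then there exists s₀ ∈ ℝ such that for every real s > s₀ the function f_s is integrable on V_d(ℤ_p) and ∫_{V_d(ℤ_p)} f_s = (1/2)·(1+q⁻¹)⁻²·(1−q⁻¹)·(1−q⁻²)³·(1−q^{1−2s})⁻¹·(1−(q⁻¹λ²−1)·q^{1−2s}+(q⁻¹λ²−1)·q^{2−4s}−q^{3−6s})⁻¹·(1 + (1+q⁻¹+q^{−2s}+2q⁻¹λ)·q^{1−2s}). -/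

import Mathlib

open Matrix MeasureTheory

noncomputable instance (p : ℕ) [Fact p.Prime] : MeasurableSpace ℚ_[p] := borel _
instance (p : ℕ) [Fact p.Prime] : BorelSpace ℚ_[p] := ⟨rfl⟩
noncomputable instance (p : ℕ) [Fact p.Prime] :
    MeasurableSpace (Matrix (Fin 2) (Fin 2) ℚ_[p]) :=
  inferInstanceAs (MeasurableSpace (Fin 2 → Fin 2 → ℚ_[p]))

/-- `V = M₂(ℚ_p) × M₂(ℚ_p)`. -/
abbrev VV (p : ℕ) [Fact p.Prime] :=
  Matrix (Fin 2) (Fin 2) ℚ_[p] × Matrix (Fin 2) (Fin 2) ℚ_[p]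

/-- `P(x,y) = −det(x·y^ι − y·x^ι)`, where `m^ι` is the adjugate. -/
noncomputable def Pq {p : ℕ} [Fact p.Prime] (v : VV p) : ℚ_[p] :=
  - (v.1 * v.2.adjugate - v.2 * v.1.adjugate).det

/-- The equivariant map `F₁ : V → ℚ_p³`. -/
noncomputable def Fmap1 {p : ℕ} [Fact p.Prime] (v : VV p) : ℚ_[p] × ℚ_[p] × ℚ_[p] :=
  (v.1 0 0 * v.2 0 1 - v.1 0 1 * v.2 0 0,
   (v.1 0 0 * v.2 1 1 - v.1 0 1 * v.2 1 0) + (v.1 1 0 * v.2 0 1 - v.1 1 1 * v.2 0 0),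
   v.1 1 0 * v.2 1 1 - v.1 1 1 * v.2 1 0)

/-- The equivariant map `F₂ : V → ℚ_p³`. -/
noncomputable def Fmap2 {p : ℕ} [Fact p.Prime] (v : VV p) : ℚ_[p] × ℚ_[p] × ℚ_[p] :=
  (v.1 0 0 * v.2 1 0 - v.2 0 0 * v.1 1 0,
   (v.1 0 0 * v.2 1 1 - v.2 0 1 * v.1 1 0) + (v.1 0 1 * v.2 1 0 - v.2 0 0 * v.1 1 1),
   v.1 0 1 * v.2 1 1 - v.2 0 1 * v.1 1 1)

/-- The maximum of the `p`-adic absolute values of the three coordinates. -/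
noncomputable def mcoord {p : ℕ} [Fact p.Prime] (t : ℚ_[p] × ℚ_[p] × ℚ_[p]) : ℝ :=
  max (max ‖t.1‖ ‖t.2.1‖) ‖t.2.2‖

/-- `V_d(ℤ_p)`: integral pairs whose invariant `P` lies in `d·(ℚ_pˣ)²`. -/
def Vd (p : ℕ) [Fact p.Prime] (d : ℤ_[p]) : Set (VV p) :=
  {v | (∀ i j, ‖v.1 i j‖ ≤ 1) ∧ (∀ i j, ‖v.2 i j‖ ≤ 1) ∧
    ∃ c : ℚ_[p], c ≠ 0 ∧ Pq v = (d : ℚ_[p]) * c ^ 2}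

open Classical in
/-- The integrand `f_s`. -/
noncomputable def fs (p : ℕ) [Fact p.Prime] (d : ℤ_[p]) (β : ℕ → ℝ) (s : ℝ)
    (v : VV p) : ℝ :=
  if h : Pq v ≠ 0 ∧
      (∃ l : ℕ, ‖(d : ℚ_[p])‖ * mcoord (Fmap1 v) ^ 2 = ‖Pq v‖ * (p : ℝ) ^ (2 * l)) ∧
      (∃ l : ℕ, ‖(d : ℚ_[p])‖ * mcoord (Fmap2 v) ^ 2 = ‖Pq v‖ * (p : ℝ) ^ (2 * l)) then
    β h.2.1.choose * β h.2.2.choose * ‖Pq v‖ ^ (s - 2)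
  else 0

/-!
A pair `(x, y)` is a `2 × 2 × 2` cube with opposite faces `x` and `y`, whose invariant `P` is the
discriminant of each of the binary quadratic forms with coefficients `F₁(x, y)` and `F₂(x, y)`. On
the stratum of `V_d(ℤ_p)` where `c` has valuation `n` and the cube has levels `A` and `B`, `f_s` is
constant, so the integral is the sum over `(n, A, B)` of these constants times the volumes of the
strata.

If the face `x` is primitive, symmetries of the cube bring a unit to its first entry, and volume
preserving substitutions then reduce this entry and the three adjacent ones to `(1, 0, 0, 0)`. There
`P` becomes `z² + 4δxy`, and the volume is computed from `|z² - d c²| = max(|z|, |c|)²`, which holds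
because `d` is a nonsquare unit. If `x` is divisible by `p`, dividing it by `p` lowers all
valuations by one. Hence the volume of the stratum of `(n, A, B)` is a constant times `p^(-3n)`, the
sizes of the spheres of radii `A` and `B` in the `(p + 1)`-regular tree, and the sum of `p^(-M)`
over `max(A, B) ≤ M ≤ n`.

Since `β` is the spherical function of the tree, summing over `A` and `B` produces the squares of
its sums over balls of radius `M`. With `X = p^(1 - 2s)` the integral is therefore a constant times
`(1 - X)⁻¹ ∑ (X / p)^M S(M)²`, where `S(M + 2) = λ S(M + 1) - p S(M)`. The squares `S(M)²` satisfy a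
linear recurrence of order three, which makes the series a rational function of `X`.
-/

namespace CubeZeta

open Metric Set

section Measure

variable {X Y : Type*} [MeasurableSpace X] [MeasurableSpace Y]

lemma measure_prod_of_fiber_const (μ : Measure X) (ν : Measure Y) [SFinite ν] {s : Set (X × Y)}
    (hs : MeasurableSet s) {B : Set X} (hB : MeasurableSet B) {c : ENNReal}
    (hin : ∀ x ∈ B, ν (Prod.mk x ⁻¹' s) = c) (hout : ∀ x ∉ B, Prod.mk x ⁻¹' s = ∅) :
    (μ.prod ν) s = μ B * c := by
  have hfun : (fun x => ν (Prod.mk x ⁻¹' s)) = B.indicator fun _ => c := by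
    funext x
    by_cases hx : x ∈ B
    · rw [hin x hx, indicator_of_mem hx]
    · rw [hout x hx, measure_empty, indicator_of_notMem hx]
  rw [Measure.prod_apply hs, hfun, lintegral_indicator_const hB, mul_comm]

lemma measure_inter_union_of_swap {μ : Measure X} {φ : X → X} (hφ : MeasurePreserving φ μ μ)
    {S A B : Set X} (hS : MeasurableSet S) (hA : MeasurableSet A) (hB : MeasurableSet B)
    (hφS : φ ⁻¹' S = S) (hφA : φ ⁻¹' A = B) (hφB : φ ⁻¹' B = A) :
    μ (S ∩ (A ∪ B)) = μ (S ∩ A) + μ (S ∩ (A \ B)) := by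
  have hswap : μ (S ∩ (A \ B)) = μ (S ∩ (B \ A)) := by
    rw [← hφ.measure_preimage (hS.inter (hA.diff hB)).nullMeasurableSet, preimage_inter,
      preimage_sdiff, hφS, hφA, hφB]
  rw [hswap, ← union_sdiff_self, inter_union_distrib_left]
  exact measure_union (disjoint_sdiff_right.mono inter_subset_right inter_subset_right)
    (hS.inter (hB.diff hA))

variable [AddCommGroup X] [TopologicalSpace X] [IsTopologicalAddGroup X] [BorelSpace X]
  [AddCommGroup Y] [TopologicalSpace Y] [IsTopologicalAddGroup Y] [LocallyCompactSpace Y]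
  [BorelSpace Y] [SecondCountableTopology Y]

lemma measure_preimage_mul_eq (μ : Measure X) [μ.IsAddHaarMeasure] (ν : Measure Y)
    [ν.IsAddHaarMeasure] (φ : X ≃ₜ+ Y) {L S : Set Y} (hL : MeasurableSet L)
    (hS : MeasurableSet S) : μ (φ ⁻¹' S) * ν L = μ (φ ⁻¹' L) * ν S := by
  have := φ.isAddHaarMeasure_map μ
  have hφ : Measurable φ := φ.continuous.measurable
  have hmap {T : Set Y} (hT : MeasurableSet T) :
      μ (φ ⁻¹' T) = (μ.map φ).addHaarScalarFactor ν * ν T := by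
    rw [← Measure.map_apply hφ hT]
    conv_lhs => rw [Measure.isAddLeftInvariant_eq_smul (μ.map φ) ν]
    rfl
  rw [hmap hS, hmap hL]
  ring

lemma measurePreserving_of_measure_preimage_eq (μ : Measure X) [μ.IsAddHaarMeasure]
    (ν : Measure Y) [ν.IsAddHaarMeasure] (φ : X ≃ₜ+ Y) {L : Set Y} (hL : MeasurableSet L)
    (hν : ν L = 1) (hμ : μ (φ ⁻¹' L) = 1) : MeasurePreserving φ μ ν where
  measurable := φ.continuous.measurable
  map_eq := Measure.ext fun S hS => by
    have hφ : Measurable φ := φ.continuous.measurable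
    rw [Measure.map_apply hφ hS]
    simpa only [hν, hμ, mul_one, one_mul] using measure_preimage_mul_eq μ ν φ hL hS

end Measure

variable {p : ℕ} [hp : Fact p.Prime]

section Balls

lemma one_lt_natCast_prime : (1 : ℝ) < p := mod_cast hp.out.one_lt

lemma natCast_prime_pos : (0 : ℝ) < p := one_pos.trans one_lt_natCast_prime

lemma natCast_prime_ne_zero : (p : ℝ) ≠ 0 := natCast_prime_pos.ne'

lemma zpow_neg_le_zpow_neg_iff {a b : ℤ} : (p : ℝ) ^ (-a) ≤ (p : ℝ) ^ (-b) ↔ b ≤ a := by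
  rw [zpow_le_zpow_iff_right₀ one_lt_natCast_prime, neg_le_neg_iff]

lemma zpow_neg_inj_iff {a b : ℤ} : (p : ℝ) ^ (-a) = (p : ℝ) ^ (-b) ↔ a = b := by
  rw [zpow_right_inj₀ natCast_prime_pos one_lt_natCast_prime.ne', neg_inj]

lemma zpow_neg_le_one_iff {a : ℤ} : (p : ℝ) ^ (-a) ≤ 1 ↔ 0 ≤ a := by
  simpa using zpow_neg_le_zpow_neg_iff (p := p) (a := a) (b := 0)

lemma norm_lt_one_iff_norm_le_inv {x : ℚ_[p]} : ‖x‖ < 1 ↔ ‖x‖ ≤ (p : ℝ)⁻¹ := by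
  simpa using Padic.norm_lt_pow_iff_norm_le_pow_sub_one x 0

lemma natCast_padic_ne_zero : (p : ℚ_[p]) ≠ 0 := mod_cast hp.out.ne_zero

lemma sphere_eq_closedBall_diff (k : ℤ) : sphere (0 : ℚ_[p]) ((p : ℝ) ^ (-k)) =
    closedBall 0 ((p : ℝ) ^ (-k)) \ closedBall 0 ((p : ℝ) ^ (-(k + 1))) := by
  ext x
  simp only [mem_sphere_zero_iff_norm, mem_sdiff, mem_closedBall_zero_iff, neg_add',
    ← Padic.norm_lt_pow_iff_norm_le_pow_sub_one, not_lt]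
  exact le_antisymm_iff

/-- The Haar measure on `ℚ_p` for which `ℤ_p` has volume `1`. -/
noncomputable def padicHaar (p : ℕ) [Fact p.Prime] : Measure ℚ_[p] :=
  Measure.addHaarMeasure ⟨⟨closedBall 0 1, isCompact_closedBall _ _⟩,
    ⟨0, ball_subset_interior_closedBall (mem_ball_self one_pos)⟩⟩

instance : (padicHaar p).IsAddHaarMeasure := by unfold padicHaar; infer_instance

lemma padicHaar_unitBall : padicHaar p (closedBall 0 1) = 1 := Measure.addHaarMeasure_self

/-- Multiplication by a nonzero `p`-adic number as an automorphism of the additive group. -/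
noncomputable def mulEquiv (a : ℚ_[p]) (ha : a ≠ 0) : ℚ_[p] ≃ₜ+ ℚ_[p] where
  toFun x := a * x
  invFun x := a⁻¹ * x
  left_inv x := inv_mul_cancel_left₀ ha x
  right_inv x := mul_inv_cancel_left₀ ha x
  map_add' := mul_add a
  continuous_toFun := by fun_prop
  continuous_invFun := by fun_prop

lemma exists_lt_norm_sub_natCast_lt_one {x : ℚ_[p]} (hx : ‖x‖ ≤ 1) :
    ∃ n < p, ‖x - n‖ < 1 := by
  obtain ⟨n, hn, h⟩ := PadicInt.exists_mem_range (⟨x, hx⟩ : ℤ_[p])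
  exact ⟨n, hn, PadicInt.mem_nonunits.1 ((IsLocalRing.mem_maximalIdeal _).1 h)⟩

lemma unitBall_eq_iUnion_residue : closedBall (0 : ℚ_[p]) 1 =
    ⋃ i : Fin p, (fun x => -(i : ℚ_[p]) + x) ⁻¹' closedBall 0 (p : ℝ)⁻¹ := by
  ext x
  simp only [mem_iUnion, mem_preimage, mem_closedBall_zero_iff, neg_add_eq_sub,
    ← norm_lt_one_iff_norm_le_inv]
  constructor
  · intro hx
    obtain ⟨n, hn, h⟩ := exists_lt_norm_sub_natCast_lt_one hx
    exact ⟨⟨n, hn⟩, h⟩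
  · rintro ⟨i, hi⟩
    have hi' : ‖((i : ℤ) : ℚ_[p])‖ ≤ 1 := Padic.norm_int_le_one _
    rw [← sub_add_cancel x (i : ℚ_[p])]
    exact (Padic.nonarchimedean _ _).trans (max_le hi.le (mod_cast hi'))

lemma pairwise_disjoint_residue : Pairwise (Function.onFun Disjoint fun i : Fin p =>
    (fun x => -(i : ℚ_[p]) + x) ⁻¹' closedBall 0 (p : ℝ)⁻¹) := by
  intro i j hij
  refine Set.disjoint_left.2 fun x hi hj => hij ?_
  simp only [mem_preimage, mem_closedBall_zero_iff, ← norm_lt_one_iff_norm_le_inv] at hi hj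
  have hsub : ‖(((i : ℤ) - (j : ℤ) : ℤ) : ℚ_[p])‖ < 1 := by
    have heq : (((i : ℤ) - (j : ℤ) : ℤ) : ℚ_[p]) = (-j + x) - (-i + x) := by push_cast; ring
    rw [heq, sub_eq_add_neg]
    exact (Padic.nonarchimedean _ _).trans_lt (max_lt hj (by rwa [norm_neg]))
  have := Int.eq_zero_of_abs_lt_dvd (Padic.norm_intCast_lt_one_iff.1 hsub) (by
    rw [abs_lt]; omega)
  exact Fin.ext (by omega)

lemma natCast_mul_padicHaar_closedBall_inv :
    (p : ENNReal) * padicHaar p (closedBall 0 (p : ℝ)⁻¹) = 1 := by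
  rw [← padicHaar_unitBall (p := p), unitBall_eq_iUnion_residue,
    measure_iUnion pairwise_disjoint_residue
      fun i => measurable_const_add _ measurableSet_closedBall]
  simp only [measure_preimage_add, tsum_fintype, Finset.sum_const, Finset.card_univ,
    Fintype.card_fin, nsmul_eq_mul]

lemma padicHaar_closedBall_succ (k : ℤ) : padicHaar p (closedBall 0 ((p : ℝ) ^ (-k))) =
    p * padicHaar p (closedBall 0 ((p : ℝ) ^ (-(k + 1)))) := by
  have hpre (m : ℤ) : mulEquiv (p : ℚ_[p]) natCast_padic_ne_zero ⁻¹'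
      closedBall 0 ((p : ℝ) ^ (-(m + 1))) = closedBall 0 ((p : ℝ) ^ (-m)) := by
    ext x
    simp only [mem_preimage, mem_closedBall_zero_iff]
    change ‖(p : ℚ_[p]) * x‖ ≤ _ ↔ _
    rw [norm_mul, Padic.norm_p, neg_add, add_comm, zpow_add₀ natCast_prime_ne_zero,
      _root_.zpow_neg_one]
    exact mul_le_mul_iff_right₀ (inv_pos.2 natCast_prime_pos)
  have h := measure_preimage_mul_eq (padicHaar p) (padicHaar p)
    (mulEquiv (p : ℚ_[p]) natCast_padic_ne_zero)
    (L := closedBall 0 ((p : ℝ) ^ (-(0 + 1) : ℤ))) (S := closedBall 0 ((p : ℝ) ^ (-(k + 1))))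
    measurableSet_closedBall measurableSet_closedBall
  rw [hpre, hpre, neg_zero, zpow_zero, padicHaar_unitBall, one_mul, zero_add,
    _root_.zpow_neg_one] at h
  rw [← h, mul_comm, mul_assoc, mul_comm _ (p : ENNReal), natCast_mul_padicHaar_closedBall_inv,
    mul_one]

lemma padicHaar_closedBall (k : ℤ) :
    padicHaar p (closedBall 0 ((p : ℝ) ^ (-k))) = ENNReal.ofReal ((p : ℝ) ^ (-k)) := by
  have hp0 : (p : ENNReal) ≠ 0 := mod_cast hp.out.ne_zero
  have hstep (k : ℤ) : ENNReal.ofReal ((p : ℝ) ^ (-k)) =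
      p * ENNReal.ofReal ((p : ℝ) ^ (-(k + 1))) := by
    rw [← ENNReal.ofReal_natCast, ← ENNReal.ofReal_mul natCast_prime_pos.le,
      ← zpow_one_add₀ natCast_prime_ne_zero]
    congr 2
    ring
  induction k using Int.induction_on with
  | zero => simpa using padicHaar_unitBall
  | succ k ih =>
    rw [padicHaar_closedBall_succ, hstep] at ih
    exact (ENNReal.mul_right_inj hp0 (ENNReal.natCast_ne_top p)).1 ih
  | pred k ih => rw [padicHaar_closedBall_succ, hstep, sub_add_cancel, ih]

lemma padicHaar_preimage_mul {a : ℚ_[p]} (ha : a ≠ 0) {S : Set ℚ_[p]} (hS : MeasurableSet S) :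
    padicHaar p ((fun x => a * x) ⁻¹' S) = ENNReal.ofReal ‖a‖⁻¹ * padicHaar p S := by
  have hball : mulEquiv a ha ⁻¹' closedBall 0 1 = closedBall 0 ((p : ℝ) ^ (-(-a.valuation))) := by
    ext x
    simp only [mem_preimage, mem_closedBall_zero_iff]
    change ‖a * x‖ ≤ 1 ↔ _
    rw [norm_mul, Padic.norm_eq_zpow_neg_valuation ha, _root_.zpow_neg _ (-a.valuation),
      ← le_inv_mul_iff₀ (zpow_pos natCast_prime_pos _), mul_one]
  have h := measure_preimage_mul_eq (padicHaar p) (padicHaar p) (mulEquiv a ha)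
    (L := closedBall 0 1) measurableSet_closedBall hS
  rw [padicHaar_unitBall, mul_one, hball, padicHaar_closedBall, _root_.zpow_neg _ (-a.valuation),
    ← Padic.norm_eq_zpow_neg_valuation ha] at h
  exact h

lemma padicHaar_sphere (k : ℤ) : padicHaar p (sphere 0 ((p : ℝ) ^ (-k))) =
    ENNReal.ofReal ((1 - (p : ℝ)⁻¹) * (p : ℝ) ^ (-k)) := by
  rw [sphere_eq_closedBall_diff, measure_sdiff _ measurableSet_closedBall.nullMeasurableSet,
    padicHaar_closedBall, padicHaar_closedBall, ← ENNReal.ofReal_sub _ (by positivity)]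
  · congr 1
    rw [neg_add, zpow_add₀ natCast_prime_ne_zero, _root_.zpow_neg_one]
    ring
  · rw [padicHaar_closedBall]
    exact ENNReal.ofReal_ne_top
  · exact closedBall_subset_closedBall (zpow_neg_le_zpow_neg_iff.2 (by omega))

end Balls

section Squares

lemma norm_two (hodd : Odd p) : ‖(2 : ℚ_[p])‖ = 1 :=
  mod_cast Padic.norm_natCast_eq_one_iff.2
    ((Nat.coprime_primes hp.out Nat.prime_two).2 fun h => by
      rw [h] at hodd
      exact absurd hodd (by decide))

lemma norm_four (hodd : Odd p) : ‖(4 : ℚ_[p])‖ = 1 := by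
  rw [show (4 : ℚ_[p]) = 2 * 2 by norm_num, norm_mul, norm_two hodd, one_mul]

lemma toZMod_eq_zero_iff {x : ℤ_[p]} : PadicInt.toZMod x = 0 ↔ ‖x‖ < 1 := by
  rw [← RingHom.mem_ker, PadicInt.ker_toZMod, IsLocalRing.mem_maximalIdeal, PadicInt.mem_nonunits]

lemma isSquare_of_norm_sq_sub_lt_one (hodd : Odd p) {a u : ℤ_[p]} (ha : ‖a‖ = 1)
    (h : ‖a ^ 2 - u‖ < 1) : IsSquare u := by
  let F : Polynomial ℤ_[p] := Polynomial.X ^ 2 - Polynomial.C u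
  have hF (z : ℤ_[p]) : F.aeval z = z ^ 2 - u := by simp [F]
  have hF' : F.derivative.aeval a = 2 * a := by simp [F, one_add_one_eq_two]
  have h2 : ‖(2 : ℤ_[p])‖ = 1 := norm_two hodd
  obtain ⟨z, hz, -⟩ := hensels_lemma (F := F) (a := a) (by
    rwa [hF, hF', norm_mul, h2, ha, one_mul, one_pow])
  rw [hF, sub_eq_zero] at hz
  exact isSquare_iff_exists_sq u |>.2 ⟨z, hz.symm⟩

lemma isSquare_of_isSquare_toZMod (hodd : Odd p) {u : ℤ_[p]} (hu : ‖u‖ = 1)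
    (h : IsSquare (PadicInt.toZMod u)) : IsSquare u := by
  obtain ⟨r, hr⟩ := h
  obtain ⟨a, rfl⟩ := ZMod.ringHom_surjective (PadicInt.toZMod (p := p)) r
  have hlt : ‖a ^ 2 - u‖ < 1 := by
    rw [← toZMod_eq_zero_iff, map_sub, map_pow, hr, sq, sub_self]
  refine isSquare_of_norm_sq_sub_lt_one hodd ?_ hlt
  refine (PadicInt.norm_le_one a).eq_of_not_lt fun ha => hu.not_lt ?_
  rw [← toZMod_eq_zero_iff] at ha ⊢
  rw [hr, ha, zero_mul]

lemma isSquare_or_isSquare_mul (hodd : Odd p) {D u : ℚ_[p]} (hD : ‖D‖ = 1)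
    (hDs : ¬ IsSquare D) (hu : ‖u‖ = 1) : IsSquare u ∨ IsSquare (D * u) := by
  obtain ⟨D, rfl⟩ : ∃ D' : ℤ_[p], D' = D := ⟨⟨D, hD.le⟩, rfl⟩
  obtain ⟨u, rfl⟩ : ∃ u' : ℤ_[p], u' = u := ⟨⟨u, hu.le⟩, rfl⟩
  rw [PadicInt.padic_norm_e_of_padicInt] at hD hu
  have hsq {w : ℤ_[p]} (h : IsSquare w) : IsSquare (w : ℚ_[p]) := h.map PadicInt.Coe.ringHom
  by_cases hs : IsSquare (PadicInt.toZMod u)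
  · exact .inl (hsq (isSquare_of_isSquare_toZMod hodd hu hs))
  right
  have hDn : ¬ IsSquare (PadicInt.toZMod D) := fun h =>
    hDs (hsq (isSquare_of_isSquare_toZMod hodd hD h))
  have hDu : ‖D * u‖ = 1 := by rw [norm_mul, hD, hu, one_mul]
  have hne : PadicInt.toZMod (D * u) ≠ 0 := fun h => hDu.not_lt (toZMod_eq_zero_iff.1 h)
  rw [← PadicInt.coe_mul]
  refine hsq (isSquare_of_isSquare_toZMod hodd hDu ?_)
  rw [← quadraticChar_one_iff_isSquare hne, map_mul, map_mul,
    quadraticChar_neg_one_iff_not_isSquare.2 hs, quadraticChar_neg_one_iff_not_isSquare.2 hDn,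
    neg_one_mul, neg_neg]

lemma norm_sq_sub_of_norm_eq_one (hodd : Odd p) {D z : ℚ_[p]} (hD : ‖D‖ = 1)
    (hDs : ¬ IsSquare D) (hz : ‖z‖ = 1) : ‖z ^ 2 - D‖ = 1 := by
  refine le_antisymm ?_ (not_lt.1 fun hlt => hDs ?_)
  · rw [sub_eq_add_neg]
    exact (Padic.nonarchimedean _ _).trans
      (max_le (by rw [norm_pow, hz, one_pow]) (by rw [norm_neg, hD]))
  · exact (isSquare_of_norm_sq_sub_lt_one (a := ⟨z, hz.le⟩) (u := ⟨D, hD.le⟩) hodd hz hlt).map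
      PadicInt.Coe.ringHom

lemma norm_sq_sub_mul_sq (hodd : Odd p) {D : ℚ_[p]} (hD : ‖D‖ = 1) (hDs : ¬ IsSquare D)
    (z c : ℚ_[p]) : ‖z ^ 2 - D * c ^ 2‖ = (max ‖z‖ ‖c‖) ^ 2 := by
  have hDc : ‖-(D * c ^ 2)‖ = ‖c‖ ^ 2 := by rw [norm_neg, norm_mul, hD, one_mul, norm_pow]
  rcases eq_or_ne ‖z‖ ‖c‖ with h | h
  · rcases eq_or_ne c 0 with rfl | hc
    · rw [norm_zero, norm_eq_zero] at h
      simp [h]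
    · have hzc : ‖z / c‖ = 1 := by rw [norm_div, h, div_self (norm_ne_zero_iff.2 hc)]
      rw [show z ^ 2 - D * c ^ 2 = ((z / c) ^ 2 - D) * c ^ 2 by field_simp, norm_mul,
        norm_sq_sub_of_norm_eq_one hodd hD hDs hzc, one_mul, norm_pow, h, max_self]
  · have hne : ‖z ^ 2‖ ≠ ‖-(D * c ^ 2)‖ := by
      rw [hDc, norm_pow]
      exact fun h' => h ((pow_left_inj₀ (norm_nonneg _) (norm_nonneg _) two_ne_zero).1 h')
    rw [sub_eq_add_neg, Padic.add_eq_max_of_ne hne, hDc, norm_pow]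
    exact ((pow_left_monotoneOn (n := 2)).map_max (norm_nonneg z) (norm_nonneg c)).symm

/-- The elements `D c²` of `ℚ_p` with `‖c‖ = p⁻ⁿ`. -/
def sqShell (D : ℚ_[p]) (n : ℤ) : Set ℚ_[p] :=
  (fun c => D * c ^ 2) '' sphere 0 ((p : ℝ) ^ (-n))

lemma measurableSet_sqShell (D : ℚ_[p]) (n : ℤ) : MeasurableSet (sqShell D n) :=
  ((isCompact_sphere _ _).image (by fun_prop)).isClosed.measurableSet

lemma mem_sqShell_iff {D t : ℚ_[p]} {n : ℤ} :
    t ∈ sqShell D n ↔ ∃ c, ‖c‖ = (p : ℝ) ^ (-n) ∧ D * c ^ 2 = t := by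
  simp only [sqShell, mem_image, mem_sphere_zero_iff_norm]

lemma norm_of_mem_sqShell {D t : ℚ_[p]} (hD : ‖D‖ = 1) {n : ℤ} (ht : t ∈ sqShell D n) :
    ‖t‖ = ((p : ℝ) ^ (-n)) ^ 2 := by
  obtain ⟨c, hc, rfl⟩ := mem_sqShell_iff.1 ht
  rw [norm_mul, hD, one_mul, norm_pow, hc]

lemma mul_mem_sqShell_iff {D a t : ℚ_[p]} (ha : a ≠ 0) {n m : ℤ} (hm : ‖a‖ = (p : ℝ) ^ (-m)) :
    a ^ 2 * t ∈ sqShell D (n + m) ↔ t ∈ sqShell D n := by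
  have hnm : (p : ℝ) ^ (-(n + m)) = (p : ℝ) ^ (-n) * ‖a‖ := by
    rw [hm, ← zpow_add₀ natCast_prime_ne_zero, neg_add]
  simp only [mem_sqShell_iff, hnm]
  constructor
  · rintro ⟨c, hc, h⟩
    refine ⟨c / a, by rw [norm_div, hc, mul_div_cancel_right₀ _ (norm_ne_zero_iff.2 ha)], ?_⟩
    rw [div_pow, mul_div_assoc', h, mul_div_cancel_left₀ _ (pow_ne_zero 2 ha)]
  · rintro ⟨c, hc, rfl⟩
    exact ⟨c * a, by rw [norm_mul, hc], by ring⟩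

lemma sphere_eq_sqShell_union (hodd : Odd p) {D : ℚ_[p]} (hD : ‖D‖ = 1) (hDs : ¬ IsSquare D)
    (n : ℤ) : sphere 0 ((p : ℝ) ^ (-(2 * n))) = sqShell 1 n ∪ sqShell D n := by
  have hsq : (p : ℝ) ^ (-(2 * n)) = ((p : ℝ) ^ (-n)) ^ 2 := by
    rw [← zpow_natCast, ← _root_.zpow_mul]
    congr 1
    push_cast
    ring
  have hD0 : D ≠ 0 := norm_ne_zero_iff.1 (hD ▸ one_ne_zero)
  have hroot {E c : ℚ_[p]} (hE : ‖E‖ = 1) (hc : ‖E * c ^ 2‖ = ((p : ℝ) ^ (-n)) ^ 2) :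
      E * c ^ 2 ∈ sqShell E n := by
    rw [norm_mul, hE, one_mul, norm_pow] at hc
    exact mem_sqShell_iff.2 ⟨c,
      (pow_left_inj₀ (norm_nonneg _) (zpow_pos natCast_prime_pos _).le two_ne_zero).1 hc, rfl⟩
  ext t
  rw [mem_sphere_zero_iff_norm, hsq]
  refine ⟨fun ht => ?_, fun ht => ht.elim (norm_of_mem_sqShell norm_one) (norm_of_mem_sqShell hD)⟩
  have hp0 : (p : ℚ_[p]) ^ n ≠ 0 := zpow_ne_zero _ natCast_padic_ne_zero
  set u := t / ((p : ℚ_[p]) ^ n) ^ 2 with hu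
  have htu : t = u * ((p : ℚ_[p]) ^ n) ^ 2 := by rw [hu, div_mul_cancel₀ _ (pow_ne_zero 2 hp0)]
  have hu1 : ‖u‖ = 1 := by
    rw [hu, norm_div, ht, norm_pow, Padic.norm_p_zpow,
      div_self (pow_ne_zero 2 (zpow_ne_zero _ natCast_prime_ne_zero))]
  rcases isSquare_or_isSquare_mul hodd hD hDs hu1 with ⟨c, hc⟩ | ⟨c, hc⟩
  · left
    have h : t = 1 * (c * (p : ℚ_[p]) ^ n) ^ 2 := by rw [htu, hc]; ring
    exact h ▸ hroot norm_one (h ▸ ht)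
  · right
    have h : t = D * (c / D * (p : ℚ_[p]) ^ n) ^ 2 := by
      rw [htu, ← mul_div_cancel_left₀ u hD0, hc]
      field_simp
    exact h ▸ hroot hD (h ▸ ht)

lemma disjoint_sqShell_one {D : ℚ_[p]} (hDs : ¬ IsSquare D) (n : ℤ) :
    Disjoint (sqShell 1 n) (sqShell D n) := by
  refine Set.disjoint_left.2 fun t h1 hD => hDs ?_
  obtain ⟨a, -, rfl⟩ := mem_sqShell_iff.1 h1
  obtain ⟨c, hc, h⟩ := mem_sqShell_iff.1 hD
  have hc0 : c ≠ 0 := norm_ne_zero_iff.1 (hc ▸ zpow_ne_zero _ natCast_prime_ne_zero)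
  refine isSquare_iff_exists_sq D |>.2 ⟨a / c, ?_⟩
  rw [div_pow, eq_div_iff (pow_ne_zero 2 hc0), h, one_mul]

lemma padicHaar_sqShell_eq {D : ℚ_[p]} (hD : ‖D‖ = 1) (n : ℤ) :
    padicHaar p (sqShell D n) = padicHaar p (sqShell 1 n) := by
  have hD0 : D ≠ 0 := norm_ne_zero_iff.1 (hD ▸ one_ne_zero)
  have h := padicHaar_preimage_mul hD0 (measurableSet_sqShell D n)
  rw [hD, inv_one, ENNReal.ofReal_one, one_mul] at h
  rw [← h]
  congr 1
  ext t
  simp only [mem_preimage, mem_sqShell_iff, one_mul, mul_right_inj' hD0]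

lemma padicHaar_sqShell (hodd : Odd p) {D : ℚ_[p]} (hD : ‖D‖ = 1) (hDs : ¬ IsSquare D) (n : ℤ) :
    padicHaar p (sqShell D n) =
      ENNReal.ofReal ((1 - (p : ℝ)⁻¹) * (p : ℝ) ^ (-(2 * n)) / 2) := by
  have h := padicHaar_sphere (p := p) (2 * n)
  rw [sphere_eq_sqShell_union hodd hD hDs, measure_union (disjoint_sqShell_one hDs n)
    (measurableSet_sqShell D n), ← padicHaar_sqShell_eq hD, ← two_mul] at h
  rw [ENNReal.ofReal_div_of_pos two_pos, ← h, ENNReal.ofReal_ofNat, mul_comm,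
    ENNReal.mul_div_cancel_right two_ne_zero ENNReal.ofNat_ne_top]

end Squares

section ReducedLocus

variable (p) in
/-- Four-dimensional `p`-adic space, with coordinates written `(δ, x, z, y)`. -/
abbrev Quad := ℚ_[p] × ℚ_[p] × ℚ_[p] × ℚ_[p]

variable (p) in
/-- The Haar measure on `ℚ_p⁴` for which the unit cube `closedBall 0 1` has volume `1`. -/
noncomputable def quadHaar : Measure (Quad p) :=
  (padicHaar p).prod ((padicHaar p).prod ((padicHaar p).prod (padicHaar p)))

instance : (quadHaar p).IsAddHaarMeasure :=
  have : ((padicHaar p).prod ((padicHaar p).prod (padicHaar p))).IsAddHaarMeasure :=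
    have : ((padicHaar p).prod (padicHaar p)).IsAddHaarMeasure :=
      Measure.prod.instIsAddHaarMeasure _ _
    Measure.prod.instIsAddHaarMeasure _ _
  Measure.prod.instIsAddHaarMeasure _ _

lemma quadHaar_unitBall : quadHaar p (closedBall 0 1) = 1 := by
  simp only [quadHaar, Prod.zero_eq_mk, ← closedBall_prod_same, Measure.prod_prod,
    padicHaar_unitBall, mul_one]

lemma mem_quad_unitBall_iff {w : Quad p} : w ∈ closedBall (0 : Quad p) 1 ↔
    ‖w.1‖ ≤ 1 ∧ ‖w.2.1‖ ≤ 1 ∧ ‖w.2.2.1‖ ≤ 1 ∧ ‖w.2.2.2‖ ≤ 1 := by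
  simp only [mem_closedBall_zero_iff, Prod.norm_def, max_le_iff]

/-- The transposition of the coordinates `x` and `y`. -/
def swapXY : Quad p ≃ₜ+ Quad p where
  toFun w := (w.1, w.2.2.2, w.2.2.1, w.2.1)
  invFun w := (w.1, w.2.2.2, w.2.2.1, w.2.1)
  left_inv _ := rfl
  right_inv _ := rfl
  map_add' _ _ := rfl
  continuous_toFun := by fun_prop
  continuous_invFun := by fun_prop

/-- The transposition of the coordinates `δ` and `y`. -/
def swapDeltaY : Quad p ≃ₜ+ Quad p where
  toFun w := (w.2.2.2, w.2.1, w.2.2.1, w.1)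
  invFun w := (w.2.2.2, w.2.1, w.2.2.1, w.1)
  left_inv _ := rfl
  right_inv _ := rfl
  map_add' _ _ := rfl
  continuous_toFun := by fun_prop
  continuous_invFun := by fun_prop

lemma quadHaar_measurePreserving (φ : Quad p ≃ₜ+ Quad p)
    (hφ : φ ⁻¹' closedBall 0 1 = closedBall 0 1) :
    MeasurePreserving φ (quadHaar p) (quadHaar p) :=
  measurePreserving_of_measure_preimage_eq _ _ φ measurableSet_closedBall quadHaar_unitBall
    (by rw [hφ, quadHaar_unitBall])

lemma measurePreserving_swapXY : MeasurePreserving swapXY (quadHaar p) (quadHaar p) :=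
  quadHaar_measurePreserving _ <| by
    ext w
    simp only [mem_preimage, mem_quad_unitBall_iff]
    change (‖w.1‖ ≤ 1 ∧ ‖w.2.2.2‖ ≤ 1 ∧ ‖w.2.2.1‖ ≤ 1 ∧ ‖w.2.1‖ ≤ 1) ↔ _
    tauto

lemma measurePreserving_swapDeltaY : MeasurePreserving swapDeltaY (quadHaar p) (quadHaar p) :=
  quadHaar_measurePreserving _ <| by
    ext w
    simp only [mem_preimage, mem_quad_unitBall_iff]
    change (‖w.2.2.2‖ ≤ 1 ∧ ‖w.2.1‖ ≤ 1 ∧ ‖w.2.2.1‖ ≤ 1 ∧ ‖w.1‖ ≤ 1) ↔ _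
    tauto

/-- The discriminant `z² + 4δxy`, to which the invariant `P` reduces on the cubes with
`x = (1 0; 0 x)` and `y = (0 δ; y z)`. -/
noncomputable def quadDisc (w : Quad p) : ℚ_[p] := w.2.2.1 ^ 2 + 4 * w.1 * w.2.1 * w.2.2.2

lemma continuous_quadDisc : Continuous (quadDisc (p := p)) := by
  unfold quadDisc
  fun_prop

/-- The points of discriminant in `sqShell D n` with `δ` and `x` of valuations `a` and `b` and with
`z` of valuation at least `M`; empty for `M > n`. -/
def shellBox (D : ℚ_[p]) (n a b M : ℤ) : Set (Quad p) :=
  {w | M ≤ n ∧ ‖w.1‖ = (p : ℝ) ^ (-a) ∧ ‖w.2.1‖ = (p : ℝ) ^ (-b) ∧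
    ‖w.2.2.1‖ ≤ (p : ℝ) ^ (-M) ∧ quadDisc w ∈ sqShell D n}

lemma measurableSet_shellBox (D : ℚ_[p]) (n a b M : ℤ) : MeasurableSet (shellBox D n a b M) := by
  have h1 : Measurable fun w : Quad p => ‖w.1‖ := by fun_prop
  have h2 : Measurable fun w : Quad p => ‖w.2.1‖ := by fun_prop
  have h3 : Measurable fun w : Quad p => ‖w.2.2.1‖ := by fun_prop
  exact (MeasurableSet.const _).inter <| (measurableSet_eq_fun h1 measurable_const).inter <|
    (measurableSet_eq_fun h2 measurable_const).inter <|
    (measurableSet_le h3 measurable_const).inter <|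
    continuous_quadDisc.measurable (measurableSet_sqShell D n)

/-- The volume of the section of a nonempty `shellBox D n a b M` at a fixed coordinate `z`; it does
not depend on `a` and `b`. -/
noncomputable def shellMass (p : ℕ) (n : ℤ) : ℝ :=
  (1 - (p : ℝ)⁻¹) ^ 3 * (p : ℝ) ^ (-(2 * n)) / 2

/-- The volume of the set of coordinates `z` of the points of `shellBox D n a b M`. -/
noncomputable def tailMass (p : ℕ) (n M : ℤ) : ℝ := if M ≤ n then (p : ℝ) ^ (-M) else 0

lemma one_sub_inv_pos : 0 < 1 - (p : ℝ)⁻¹ := sub_pos.2 (inv_lt_one_of_one_lt₀ one_lt_natCast_prime)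

lemma shellMass_nonneg (n : ℤ) : 0 ≤ shellMass p n := by
  have := one_sub_inv_pos (p := p)
  unfold shellMass
  positivity

lemma tailMass_nonneg (q : ℕ) (n M : ℤ) : 0 ≤ tailMass q n M := by
  unfold tailMass
  positivity

lemma padicHaar_affine_preimage_sqShell (hodd : Odd p) {D : ℚ_[p]} (hD : ‖D‖ = 1)
    (hDs : ¬ IsSquare D) (n : ℤ) {a : ℚ_[p]} (ha : a ≠ 0) (b : ℚ_[p]) :
    padicHaar p {t | b + a * t ∈ sqShell D n} =
      ENNReal.ofReal (‖a‖⁻¹ * ((1 - (p : ℝ)⁻¹) * (p : ℝ) ^ (-(2 * n)) / 2)) := by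
  have hpre : {t | b + a * t ∈ sqShell D n} =
      (fun t => a * t) ⁻¹' ((fun t => b + t) ⁻¹' sqShell D n) := rfl
  rw [hpre, padicHaar_preimage_mul ha (measurable_const_add b (measurableSet_sqShell D n)),
    measure_preimage_add, padicHaar_sqShell hodd hD hDs, ENNReal.ofReal_mul (by positivity)]

lemma padicHaar_prod_quadratic_preimage_sqShell (hodd : Odd p) {D : ℚ_[p]} (hD : ‖D‖ = 1)
    (hDs : ¬ IsSquare D) (n M : ℤ) {a : ℚ_[p]} (ha : a ≠ 0) :
    ((padicHaar p).prod (padicHaar p))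
      {w | ‖w.1‖ ≤ (p : ℝ) ^ (-M) ∧ w.1 ^ 2 + a * w.2 ∈ sqShell D n} = ENNReal.ofReal
        ((p : ℝ) ^ (-M) * (‖a‖⁻¹ * ((1 - (p : ℝ)⁻¹) * (p : ℝ) ^ (-(2 * n)) / 2))) := by
  have hnorm : Measurable fun w : ℚ_[p] × ℚ_[p] => ‖w.1‖ := by fun_prop
  have hdisc : Measurable fun w : ℚ_[p] × ℚ_[p] => w.1 ^ 2 + a * w.2 :=
    (by fun_prop : Continuous fun w : ℚ_[p] × ℚ_[p] => w.1 ^ 2 + a * w.2).measurable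
  have hmeas : MeasurableSet {w : ℚ_[p] × ℚ_[p] |
      ‖w.1‖ ≤ (p : ℝ) ^ (-M) ∧ w.1 ^ 2 + a * w.2 ∈ sqShell D n} :=
    (measurableSet_le hnorm measurable_const).inter (hdisc (measurableSet_sqShell D n))
  rw [measure_prod_of_fiber_const (B := closedBall 0 ((p : ℝ) ^ (-M))) _ _ hmeas
    measurableSet_closedBall _ fun z hz => eq_empty_of_forall_notMem fun t ht => hz
      (mem_closedBall_zero_iff.2 ht.1), padicHaar_closedBall, ← ENNReal.ofReal_mul (by positivity)]
  intro z hz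
  rw [← padicHaar_affine_preimage_sqShell hodd hD hDs n ha (z ^ 2)]
  congr 1
  ext t
  exact and_iff_right (mem_closedBall_zero_iff.1 hz)

lemma quadHaar_shellBox (hodd : Odd p) {D : ℚ_[p]} (hD : ‖D‖ = 1) (hDs : ¬ IsSquare D)
    (n a b M : ℤ) : quadHaar p (shellBox D n a b M) =
      ENNReal.ofReal (shellMass p n * tailMass p n M) := by
  by_cases hM : M ≤ n
  swap
  · rw [tailMass, if_neg hM, mul_zero, ENNReal.ofReal_zero]
    exact measure_mono_null (fun w hw => hM hw.1) measure_empty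
  have hp0 := natCast_prime_ne_zero (p := p)
  have hq := one_sub_inv_pos (p := p)
  have hne {r : ℚ_[p]} {k : ℤ} (hr : ‖r‖ = (p : ℝ) ^ (-k)) : r ≠ 0 :=
    norm_ne_zero_iff.1 (hr ▸ zpow_ne_zero _ hp0)
  have h4 : (4 : ℚ_[p]) ≠ 0 := norm_ne_zero_iff.1 (norm_four hodd ▸ one_ne_zero)
  have hmeas := measurableSet_shellBox D n a b M
  rw [quadHaar, measure_prod_of_fiber_const (B := sphere 0 ((p : ℝ) ^ (-a))) _ _ hmeas
    isClosed_sphere.measurableSet (fun r hr => measure_prod_of_fiber_const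
      (B := sphere 0 ((p : ℝ) ^ (-b))) _ _ (measurable_prodMk_left hmeas)
      isClosed_sphere.measurableSet (c := ENNReal.ofReal ((p : ℝ) ^ (-M) *
        (((p : ℝ) ^ (-a) * (p : ℝ) ^ (-b))⁻¹ * ((1 - (p : ℝ)⁻¹) * (p : ℝ) ^ (-(2 * n)) / 2))))
      (fun s hs => ?_) fun s hs => eq_empty_of_forall_notMem fun w hw =>
        hs (mem_sphere_zero_iff_norm.2 hw.2.2.1))
    fun r hr => eq_empty_of_forall_notMem fun w hw => hr (mem_sphere_zero_iff_norm.2 hw.2.1),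
    padicHaar_sphere, padicHaar_sphere, ← ENNReal.ofReal_mul (by positivity),
    ← ENNReal.ofReal_mul (by positivity), shellMass, tailMass, if_pos hM]
  · congr 1
    simp only [_root_.zpow_neg]
    field_simp
  · rw [mem_sphere_zero_iff_norm] at hr hs
    have h := padicHaar_prod_quadratic_preimage_sqShell hodd hD hDs n M
      (mul_ne_zero (mul_ne_zero h4 (hne hr)) (hne hs))
    rw [norm_mul, norm_mul, norm_four hodd, hr, hs, one_mul] at h
    rw [← h]
    congr 1
    ext w
    simp only [shellBox, quadDisc, mem_preimage, mem_ofPred_eq, hM, hr, hs, true_and]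

end ReducedLocus

section ReducedLocusVolume

lemma max_norm_eq_zpow_neg {z c : ℚ_[p]} {n : ℤ} (hc : ‖c‖ = (p : ℝ) ^ (-n)) :
    ∃ m ≤ n, max ‖z‖ ‖c‖ = (p : ℝ) ^ (-m) ∧ ∀ k ≤ n, ‖z‖ ≤ (p : ℝ) ^ (-k) ↔ k ≤ m := by
  rcases le_or_gt ‖z‖ ‖c‖ with h | h
  · refine ⟨n, le_rfl, by rw [max_eq_right h, hc], fun k hk => iff_of_true ?_ hk⟩
    exact (h.trans_eq hc).trans (zpow_neg_le_zpow_neg_iff.2 hk)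
  · have hz := Padic.norm_eq_zpow_neg_valuation (norm_pos_iff.1 ((norm_nonneg c).trans_lt h))
    refine ⟨z.valuation, ?_, by rw [max_eq_left h.le, hz], fun k _ => ?_⟩
    · rw [← zpow_neg_le_zpow_neg_iff (p := p), ← hz, ← hc]
      exact h.le
    · rw [hz, zpow_neg_le_zpow_neg_iff]

/-- The coordinates `δ`, `x`, `y` of `w` have valuations `b`, `j`, `i`, the minimum of `n` and the
valuation of `z` is `m`, and `b + j + i = 2 m`. -/
structure HasValuations (w : Quad p) (n b j i m : ℤ) : Prop where
  norm_delta : ‖w.1‖ = (p : ℝ) ^ (-b)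
  norm_x : ‖w.2.1‖ = (p : ℝ) ^ (-j)
  norm_y : ‖w.2.2.2‖ = (p : ℝ) ^ (-i)
  add_eq : b + j + i = 2 * m
  le : m ≤ n
  norm_z_le_iff : ∀ k ≤ n, ‖w.2.2.1‖ ≤ (p : ℝ) ^ (-k) ↔ k ≤ m

lemma exists_hasValuations (hodd : Odd p) {D : ℚ_[p]} (hD : ‖D‖ = 1) (hDs : ¬ IsSquare D)
    {w : Quad p} {n : ℤ} (hw : quadDisc w ∈ sqShell D n) :
    ∃ b j i m, HasValuations w n b j i m := by
  obtain ⟨c, hc, hdisc⟩ := mem_sqShell_iff.1 hw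
  obtain ⟨m, hmn, hm, hz⟩ := max_norm_eq_zpow_neg (z := w.2.2.1) hc
  have hprod : ‖w.1‖ * ‖w.2.1‖ * ‖w.2.2.2‖ = (p : ℝ) ^ (-(2 * m)) := by
    have h : w.2.2.1 ^ 2 - D * c ^ 2 = -(4 * w.1 * w.2.1 * w.2.2.2) := by
      rw [hdisc, quadDisc]
      ring
    calc ‖w.1‖ * ‖w.2.1‖ * ‖w.2.2.2‖ = ‖w.2.2.1 ^ 2 - D * c ^ 2‖ := by
          rw [h, norm_neg, norm_mul, norm_mul, norm_mul, norm_four hodd, one_mul]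
      _ = ((p : ℝ) ^ (-m)) ^ 2 := by rw [norm_sq_sub_mul_sq hodd hD hDs, hm]
      _ = (p : ℝ) ^ (-(2 * m)) := by
          rw [← zpow_natCast, ← _root_.zpow_mul, mul_comm 2 m, neg_mul, Nat.cast_ofNat]
  have hne : w.1 * w.2.1 * w.2.2.2 ≠ 0 := by
    rw [← norm_ne_zero_iff, norm_mul, norm_mul, hprod]
    exact zpow_ne_zero _ natCast_prime_ne_zero
  have hδ := Padic.norm_eq_zpow_neg_valuation (left_ne_zero_of_mul (left_ne_zero_of_mul hne))
  have hx := Padic.norm_eq_zpow_neg_valuation (right_ne_zero_of_mul (left_ne_zero_of_mul hne))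
  have hy := Padic.norm_eq_zpow_neg_valuation (right_ne_zero_of_mul hne)
  refine ⟨_, _, _, m, hδ, hx, hy, ?_, hmn, hz⟩
  rw [hδ, hx, hy, ← zpow_add₀ natCast_prime_ne_zero, ← zpow_add₀ natCast_prime_ne_zero,
    ← neg_add, ← neg_add] at hprod
  exact neg_injective (zpow_right_injective₀ natCast_prime_pos one_lt_natCast_prime.ne' hprod)

lemma mcoord_eq_zpow_neg_min {r z t : ℚ_[p]} {b c m : ℤ} (hr : ‖r‖ = (p : ℝ) ^ (-b))
    (ht : ‖t‖ = (p : ℝ) ^ (-c)) (hz : ‖z‖ ≤ (p : ℝ) ^ (-m)) (hm : b + c = 2 * m) :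
    mcoord (r, z, -t) = (p : ℝ) ^ (-min b c) := by
  rw [mcoord, norm_neg, hr, ht]
  rcases le_total b c with h | h
  · rw [min_eq_left h, max_eq_left (hz.trans (zpow_neg_le_zpow_neg_iff.2 (by omega))),
      max_eq_left (zpow_neg_le_zpow_neg_iff.2 h)]
  · rw [min_eq_right h, max_eq_right (max_le (zpow_neg_le_zpow_neg_iff.2 h)
      (hz.trans (zpow_neg_le_zpow_neg_iff.2 (by omega))))]

/-- The integral points with `x` of valuation at least `a` which, viewed as the cube with
`x = (1 0; 0 x)` and `y = (0 δ; y z)`, have `P` in `sqShell D n` and binary quadratic forms `F₁`,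
`F₂` of content `p^α`, `p^β`. -/
def reducedLocus (D : ℚ_[p]) (n α β a : ℤ) : Set (Quad p) :=
  {w | w ∈ closedBall 0 1 ∧ ‖w.2.1‖ ≤ (p : ℝ) ^ (-a) ∧ quadDisc w ∈ sqShell D n ∧
    mcoord (w.1, w.2.2.1, -(w.2.1 * w.2.2.2)) = (p : ℝ) ^ (-α) ∧
    mcoord (w.2.2.2, w.2.2.1, -(w.1 * w.2.1)) = (p : ℝ) ^ (-β)}

namespace HasValuations

variable {w : Quad p} {n b j i m : ℤ}

lemma mem_reducedLocus_iff (h : HasValuations w n b j i m) (hn : 0 ≤ n) {D : ℚ_[p]}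
    (hw : quadDisc w ∈ sqShell D n) {α β a : ℤ} (ha : 0 ≤ a) : w ∈ reducedLocus D n α β a ↔
      0 ≤ b ∧ a ≤ j ∧ 0 ≤ i ∧ min b (i + j) = α ∧ min i (b + j) = β := by
  have hadd := h.add_eq
  have hz := (h.norm_z_le_iff m h.le).2 le_rfl
  have hxy : ‖w.2.1 * w.2.2.2‖ = (p : ℝ) ^ (-(i + j)) := by
    rw [norm_mul, h.norm_x, h.norm_y, ← zpow_add₀ natCast_prime_ne_zero, neg_add_rev]
  have hδx : ‖w.1 * w.2.1‖ = (p : ℝ) ^ (-(b + j)) := by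
    rw [norm_mul, h.norm_delta, h.norm_x, ← zpow_add₀ natCast_prime_ne_zero, neg_add]
  have hz1 : ‖w.2.2.1‖ ≤ 1 ↔ 0 ≤ m := by simpa using h.norm_z_le_iff 0 hn
  rw [reducedLocus, mem_ofPred_eq, mcoord_eq_zpow_neg_min h.norm_delta hxy hz (by omega),
    mcoord_eq_zpow_neg_min h.norm_y hδx hz (by omega), mem_quad_unitBall_iff, h.norm_delta,
    h.norm_x, h.norm_y, hz1]
  simp only [zpow_neg_le_one_iff, zpow_neg_le_zpow_neg_iff, zpow_neg_inj_iff, hw, true_and]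
  omega

lemma mem_shellBox_iff (h : HasValuations w n b j i m) {D : ℚ_[p]}
    (hw : quadDisc w ∈ sqShell D n) {k l M : ℤ} :
    w ∈ shellBox D n k l M ↔ M ≤ m ∧ b = k ∧ j = l := by
  have hle := h.le
  rw [shellBox, mem_ofPred_eq, h.norm_delta, h.norm_x, zpow_neg_inj_iff, zpow_neg_inj_iff]
  constructor
  · rintro ⟨hM, hb, hj, hz, -⟩
    exact ⟨(h.norm_z_le_iff M hM).1 hz, hb, hj⟩
  · rintro ⟨hM, hb, hj⟩
    exact ⟨by omega, hb, hj, (h.norm_z_le_iff M (by omega)).2 hM, hw⟩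

lemma swapXY (h : HasValuations w n b j i m) : HasValuations (swapXY w) n b i j m where
  norm_delta := h.norm_delta
  norm_x := h.norm_y
  norm_y := h.norm_x
  add_eq := by have := h.add_eq; omega
  le := h.le
  norm_z_le_iff := h.norm_z_le_iff

lemma swapDeltaY (h : HasValuations w n b j i m) : HasValuations (swapDeltaY w) n i j b m where
  norm_delta := h.norm_y
  norm_x := h.norm_x
  norm_y := h.norm_delta
  add_eq := by have := h.add_eq; omega
  le := h.le
  norm_z_le_iff := h.norm_z_le_iff

end HasValuations

lemma quadDisc_swapXY (w : Quad p) : quadDisc (swapXY w) = quadDisc w := by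
  change w.2.2.1 ^ 2 + 4 * w.1 * w.2.2.2 * w.2.1 = w.2.2.1 ^ 2 + 4 * w.1 * w.2.1 * w.2.2.2
  ring

lemma quadDisc_swapDeltaY (w : Quad p) : quadDisc (swapDeltaY w) = quadDisc w := by
  change w.2.2.1 ^ 2 + 4 * w.2.2.2 * w.2.1 * w.1 = w.2.2.1 ^ 2 + 4 * w.1 * w.2.1 * w.2.2.2
  ring

lemma eq_of_hasValuations (hodd : Odd p) {D : ℚ_[p]} (hD : ‖D‖ = 1) (hDs : ¬ IsSquare D)
    {n : ℤ} {S T : Set (Quad p)} (hS : S ⊆ quadDisc ⁻¹' sqShell D n)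
    (hT : T ⊆ quadDisc ⁻¹' sqShell D n) (h : ∀ w b j i m, quadDisc w ∈ sqShell D n →
      HasValuations w n b j i m → (w ∈ S ↔ w ∈ T)) : S = T := by
  ext w
  by_cases hw : quadDisc w ∈ sqShell D n
  · obtain ⟨b, j, i, m, hv⟩ := exists_hasValuations hodd hD hDs hw
    exact h w b j i m hw hv
  · exact iff_of_false (fun hwS => hw (hS hwS)) fun hwT => hw (hT hwT)

lemma shellBox_subset (D : ℚ_[p]) (n k l M : ℤ) : shellBox D n k l M ⊆ quadDisc ⁻¹' sqShell D n :=
  fun _ hw => hw.2.2.2.2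

lemma swapXY_preimage_shellBox_subset (D : ℚ_[p]) (n k l M : ℤ) :
    swapXY ⁻¹' shellBox D n k l M ⊆ quadDisc ⁻¹' sqShell D n := fun w hw => by
  rw [mem_preimage, ← quadDisc_swapXY]
  exact shellBox_subset D n k l M hw

lemma swapDeltaY_preimage_shellBox_subset (D : ℚ_[p]) (n k l M : ℤ) :
    swapDeltaY ⁻¹' shellBox D n k l M ⊆ quadDisc ⁻¹' sqShell D n := fun w hw => by
  rw [mem_preimage, ← quadDisc_swapDeltaY]
  exact shellBox_subset D n k l M hw

lemma reducedLocus_subset (D : ℚ_[p]) (n α β a : ℤ) :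
    reducedLocus D n α β a ⊆ quadDisc ⁻¹' sqShell D n := fun _ hw => hw.2.2.1

namespace HasValuations

variable {w : Quad p} {n b j i m : ℤ}

lemma mem_swapXY_preimage_shellBox_iff (h : HasValuations w n b j i m) {D : ℚ_[p]}
    (hw : quadDisc w ∈ sqShell D n) {k l M : ℤ} :
    w ∈ CubeZeta.swapXY ⁻¹' shellBox D n k l M ↔ M ≤ m ∧ b = k ∧ i = l :=
  h.swapXY.mem_shellBox_iff (by rwa [quadDisc_swapXY])

lemma mem_swapDeltaY_preimage_shellBox_iff (h : HasValuations w n b j i m) {D : ℚ_[p]}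
    (hw : quadDisc w ∈ sqShell D n) {k l M : ℤ} :
    w ∈ CubeZeta.swapDeltaY ⁻¹' shellBox D n k l M ↔ M ≤ m ∧ i = k ∧ j = l :=
  h.swapDeltaY.mem_shellBox_iff (by rwa [quadDisc_swapDeltaY])

end HasValuations

lemma reducedLocus_of_lt (hodd : Odd p) {D : ℚ_[p]} (hD : ‖D‖ = 1) (hDs : ¬ IsSquare D)
    {n α β a : ℤ} (hα : 0 ≤ α) (hαβ : α < β) (hβ : β ≤ n) (ha : 0 ≤ a) (ha1 : a ≤ 1) :
    reducedLocus D n α β a =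
      swapXY ⁻¹' shellBox D n α β β ∪ shellBox D n α (β - α) (β + 1) := by
  refine eq_of_hasValuations hodd hD hDs (reducedLocus_subset _ _ _ _ _)
    (union_subset (swapXY_preimage_shellBox_subset _ _ _ _ _) (shellBox_subset _ _ _ _ _))
    fun w b j i m hw h => ?_
  rw [h.mem_reducedLocus_iff (by omega) hw ha, mem_union, h.mem_swapXY_preimage_shellBox_iff hw,
    h.mem_shellBox_iff hw]
  have := h.add_eq
  omega

lemma reducedLocus_self_zero (hodd : Odd p) {D : ℚ_[p]} (hD : ‖D‖ = 1) (hDs : ¬ IsSquare D)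
    {n α : ℤ} (hα : 0 ≤ α) (hn : α ≤ n) :
    reducedLocus D n α α 0 = swapXY ⁻¹' shellBox D n α α α ∪
      (shellBox D n α 0 (α + 1) ∪ swapDeltaY ⁻¹' shellBox D n α 0 (α + 1)) := by
  refine eq_of_hasValuations hodd hD hDs (reducedLocus_subset _ _ _ _ _) (union_subset
    (swapXY_preimage_shellBox_subset _ _ _ _ _) (union_subset (shellBox_subset _ _ _ _ _)
      (swapDeltaY_preimage_shellBox_subset _ _ _ _ _))) fun w b j i m hw h => ?_
  rw [h.mem_reducedLocus_iff (by omega) hw le_rfl, mem_union, mem_union,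
    h.mem_swapXY_preimage_shellBox_iff hw, h.mem_shellBox_iff hw,
    h.mem_swapDeltaY_preimage_shellBox_iff hw]
  have := h.add_eq
  omega

lemma reducedLocus_self_one (hodd : Odd p) {D : ℚ_[p]} (hD : ‖D‖ = 1) (hDs : ¬ IsSquare D)
    {n α : ℤ} (hα : 0 ≤ α) (hn : α ≤ n) :
    reducedLocus D n α α 1 = swapXY ⁻¹' shellBox D n α α (α + 1) := by
  refine eq_of_hasValuations hodd hD hDs (reducedLocus_subset _ _ _ _ _)
    (swapXY_preimage_shellBox_subset _ _ _ _ _) fun w b j i m hw h => ?_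
  rw [h.mem_reducedLocus_iff (by omega) hw zero_le_one, h.mem_swapXY_preimage_shellBox_iff hw]
  have := h.add_eq
  omega

lemma quadHaar_swapXY_preimage_shellBox (hodd : Odd p) {D : ℚ_[p]} (hD : ‖D‖ = 1)
    (hDs : ¬ IsSquare D) (n a b M : ℤ) : quadHaar p (swapXY ⁻¹' shellBox D n a b M) =
      ENNReal.ofReal (shellMass p n * tailMass p n M) := by
  rw [measurePreserving_swapXY.measure_preimage
    (measurableSet_shellBox D n a b M).nullMeasurableSet, quadHaar_shellBox hodd hD hDs]

lemma quadHaar_swapDeltaY_preimage_shellBox (hodd : Odd p) {D : ℚ_[p]} (hD : ‖D‖ = 1)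
    (hDs : ¬ IsSquare D) (n a b M : ℤ) : quadHaar p (swapDeltaY ⁻¹' shellBox D n a b M) =
      ENNReal.ofReal (shellMass p n * tailMass p n M) := by
  rw [measurePreserving_swapDeltaY.measure_preimage
    (measurableSet_shellBox D n a b M).nullMeasurableSet, quadHaar_shellBox hodd hD hDs]

lemma quadHaar_reducedLocus_of_lt (hodd : Odd p) {D : ℚ_[p]} (hD : ‖D‖ = 1) (hDs : ¬ IsSquare D)
    {n α β a : ℤ} (hα : 0 ≤ α) (hαβ : α < β) (hβ : β ≤ n) (ha : 0 ≤ a) (ha1 : a ≤ 1) :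
    quadHaar p (reducedLocus D n α β a) =
      ENNReal.ofReal (shellMass p n * (tailMass p n β + tailMass p n (β + 1))) := by
  have hdisj : Disjoint (swapXY ⁻¹' shellBox D n α β β) (shellBox D n α (β - α) (β + 1)) := by
    refine disjoint_iff_inter_eq_empty.2 (eq_of_hasValuations hodd hD hDs
      (inter_subset_right.trans (shellBox_subset _ _ _ _ _)) (empty_subset _)
      fun w b j i m hw h => ?_)
    rw [mem_inter_iff, h.mem_swapXY_preimage_shellBox_iff hw, h.mem_shellBox_iff hw,
      mem_empty_iff_false, iff_false]
    have := h.add_eq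
    omega
  rw [reducedLocus_of_lt hodd hD hDs hα hαβ hβ ha ha1,
    measure_union hdisj (measurableSet_shellBox _ _ _ _ _),
    quadHaar_swapXY_preimage_shellBox hodd hD hDs, quadHaar_shellBox hodd hD hDs, mul_add,
    ENNReal.ofReal_add (mul_nonneg (shellMass_nonneg n) (tailMass_nonneg p n _))
      (mul_nonneg (shellMass_nonneg n) (tailMass_nonneg p n _))]

lemma quadHaar_reducedLocus_self_zero (hodd : Odd p) {D : ℚ_[p]} (hD : ‖D‖ = 1)
    (hDs : ¬ IsSquare D) {n α : ℤ} (hα : 0 ≤ α) (hn : α ≤ n) :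
    quadHaar p (reducedLocus D n α α 0) =
      ENNReal.ofReal (shellMass p n * (tailMass p n α + 2 * tailMass p n (α + 1))) := by
  have hmeas := measurableSet_shellBox D n α 0 (α + 1)
  have hmeas' := measurePreserving_swapDeltaY.measurable hmeas
  have hdisj : Disjoint (shellBox D n α 0 (α + 1))
      (swapDeltaY ⁻¹' shellBox D n α 0 (α + 1)) := by
    refine disjoint_iff_inter_eq_empty.2 (eq_of_hasValuations hodd hD hDs
      (inter_subset_left.trans (shellBox_subset _ _ _ _ _)) (empty_subset _)
      fun w b j i m hw h => ?_)
    rw [mem_inter_iff, h.mem_swapDeltaY_preimage_shellBox_iff hw, h.mem_shellBox_iff hw,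
      mem_empty_iff_false, iff_false]
    have := h.add_eq
    omega
  have hdisj' : Disjoint (swapXY ⁻¹' shellBox D n α α α)
      (shellBox D n α 0 (α + 1) ∪ swapDeltaY ⁻¹' shellBox D n α 0 (α + 1)) := by
    refine disjoint_iff_inter_eq_empty.2 (eq_of_hasValuations hodd hD hDs
      (inter_subset_left.trans (swapXY_preimage_shellBox_subset _ _ _ _ _)) (empty_subset _)
      fun w b j i m hw h => ?_)
    rw [mem_inter_iff, mem_union, h.mem_swapXY_preimage_shellBox_iff hw, h.mem_shellBox_iff hw,
      h.mem_swapDeltaY_preimage_shellBox_iff hw, mem_empty_iff_false, iff_false]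
    have := h.add_eq
    omega
  have hu := shellMass_nonneg (p := p) n
  have ht := tailMass_nonneg p n
  rw [reducedLocus_self_zero hodd hD hDs hα hn, measure_union hdisj' (hmeas.union hmeas'),
    measure_union hdisj hmeas', quadHaar_swapXY_preimage_shellBox hodd hD hDs,
    quadHaar_swapDeltaY_preimage_shellBox hodd hD hDs, quadHaar_shellBox hodd hD hDs,
    ← ENNReal.ofReal_add (mul_nonneg hu (ht _)) (mul_nonneg hu (ht _)),
    ← ENNReal.ofReal_add (mul_nonneg hu (ht _))
      (add_nonneg (mul_nonneg hu (ht _)) (mul_nonneg hu (ht _)))]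
  congr 1
  ring

/-- For `k ≤ n`, the number of vertices at distance `n - k` from a vertex of the `(p + 1)`-regular
tree, divided by `p^(n - k)`. -/
noncomputable def levelFactor (p : ℕ) (n k : ℤ) : ℝ := if k < n then 1 + (p : ℝ)⁻¹ else 1

lemma tailMass_add_one (n k : ℤ) :
    tailMass p n (k + 1) = (p : ℝ) ^ (-k) * (levelFactor p n k - 1) := by
  simp only [tailMass, levelFactor, Int.add_one_le_iff]
  split_ifs
  · rw [neg_add, zpow_add₀ natCast_prime_ne_zero, _root_.zpow_neg_one]
    ring
  · rw [sub_self, mul_zero]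

lemma quadHaar_reducedLocus (hodd : Odd p) {D : ℚ_[p]} (hD : ‖D‖ = 1) (hDs : ¬ IsSquare D)
    {n α β : ℤ} (hα : 0 ≤ α) (hαβ : α ≤ β) (hβ : β ≤ n) :
    quadHaar p (reducedLocus D n α β 0) +
        ENNReal.ofReal (p : ℝ)⁻¹ * quadHaar p (reducedLocus D n α β 1) =
      ENNReal.ofReal (shellMass p n *
        ((p : ℝ) ^ (-β) * (levelFactor p n α * levelFactor p n β))) := by
  have hu := shellMass_nonneg (p := p) n
  have ht := tailMass_nonneg p n
  have htail : tailMass p n β = (p : ℝ) ^ (-β) := if_pos hβ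
  have hα' (h : α < n) : levelFactor p n α = 1 + (p : ℝ)⁻¹ := if_pos h
  rcases hαβ.lt_or_eq with hlt | rfl
  · rw [quadHaar_reducedLocus_of_lt hodd hD hDs hα hlt hβ le_rfl zero_le_one,
      quadHaar_reducedLocus_of_lt hodd hD hDs hα hlt hβ zero_le_one le_rfl,
      ← ENNReal.ofReal_mul (by positivity), ← ENNReal.ofReal_add
        (mul_nonneg hu (add_nonneg (ht _) (ht _)))
        (mul_nonneg (by positivity) (mul_nonneg hu (add_nonneg (ht _) (ht _)))),
      hα' (hlt.trans_le hβ), htail, tailMass_add_one]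
    congr 1
    ring
  · have hsq : levelFactor p n α ^ 2 =
        1 + (2 + (p : ℝ)⁻¹) * (levelFactor p n α - 1) := by
      unfold levelFactor
      split_ifs <;> ring
    rw [quadHaar_reducedLocus_self_zero hodd hD hDs hα hβ, reducedLocus_self_one hodd hD hDs hα hβ,
      quadHaar_swapXY_preimage_shellBox hodd hD hDs,
      ← ENNReal.ofReal_mul (by positivity), ← ENNReal.ofReal_add
        (mul_nonneg hu (add_nonneg (ht _) (mul_nonneg zero_le_two (ht _))))
        (mul_nonneg (by positivity) (mul_nonneg hu (ht _))), htail, tailMass_add_one, ← sq, hsq]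
    congr 1
    ring

end ReducedLocusVolume

section Levels

lemma mcoord_le_iff {t : ℚ_[p] × ℚ_[p] × ℚ_[p]} {r : ℝ} :
    mcoord t ≤ r ↔ ‖t.1‖ ≤ r ∧ ‖t.2.1‖ ≤ r ∧ ‖t.2.2‖ ≤ r := by
  simp only [mcoord, max_le_iff, and_assoc]

lemma norm_add_le_of_le {a b : ℚ_[p]} {r : ℝ} (ha : ‖a‖ ≤ r) (hb : ‖b‖ ≤ r) : ‖a + b‖ ≤ r :=
  (Padic.nonarchimedean a b).trans (max_le ha hb)

lemma norm_mul_le_of_norm_le_one {a b : ℚ_[p]} {r : ℝ} (ha : ‖a‖ ≤ 1) (hb : ‖b‖ ≤ r) :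
    ‖a * b‖ ≤ r := by
  rw [norm_mul]
  exact (mul_le_of_le_one_left (norm_nonneg b) ha).trans hb

lemma mcoord_shear_le {k : ℚ_[p]} (hk : ‖k‖ ≤ 1) (a b c : ℚ_[p]) :
    mcoord (a, b + 2 * k * a, c + k * b + k ^ 2 * a) ≤ mcoord (a, b, c) := by
  obtain ⟨ha, hb, hc⟩ := mcoord_le_iff.1 (le_refl (mcoord (a, b, c)))
  have h2k : ‖2 * k‖ ≤ 1 :=
    norm_mul_le_of_norm_le_one (by simpa using Padic.norm_int_le_one (p := p) 2) hk
  have hk2 : ‖k ^ 2‖ ≤ 1 := by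
    rw [norm_pow]
    exact pow_le_one₀ (norm_nonneg k) hk
  exact mcoord_le_iff.2 ⟨ha, norm_add_le_of_le hb (norm_mul_le_of_norm_le_one h2k ha),
    norm_add_le_of_le (norm_add_le_of_le hc (norm_mul_le_of_norm_le_one hk hb))
      (norm_mul_le_of_norm_le_one hk2 ha)⟩

lemma mcoord_shear {k : ℚ_[p]} (hk : ‖k‖ ≤ 1) (a b c : ℚ_[p]) :
    mcoord (a, b + 2 * k * a, c + k * b + k ^ 2 * a) = mcoord (a, b, c) := by
  refine (mcoord_shear_le hk a b c).antisymm ?_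
  refine Eq.trans_le ?_ (mcoord_shear_le (by rwa [norm_neg] : ‖-k‖ ≤ 1) _ _ _)
  congr 3 <;> ring

lemma mcoord_neg (t : ℚ_[p] × ℚ_[p] × ℚ_[p]) : mcoord (-t) = mcoord t := by
  simp only [mcoord, Prod.fst_neg, Prod.snd_neg, norm_neg]

lemma mcoord_smul (a : ℚ_[p]) (t : ℚ_[p] × ℚ_[p] × ℚ_[p]) :
    mcoord (a • t) = ‖a‖ * mcoord t := by
  simp only [mcoord, Prod.smul_fst, Prod.smul_snd, smul_eq_mul, norm_mul,
    mul_max_of_nonneg _ _ (norm_nonneg a)]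

lemma mcoord_reverse (a b c : ℚ_[p]) : mcoord (c, b, a) = mcoord (a, b, c) := by
  simp only [mcoord]
  rw [max_right_comm, max_comm ‖c‖, max_right_comm]

lemma continuous_mcoord : Continuous (mcoord (p := p)) := by
  unfold mcoord
  fun_prop

lemma continuous_Fmap1 : Continuous (Fmap1 (p := p)) := by
  unfold Fmap1
  fun_prop

lemma continuous_Fmap2 : Continuous (Fmap2 (p := p)) := by
  unfold Fmap2
  fun_prop

lemma continuous_Pq : Continuous (Pq (p := p)) := by
  unfold Pq
  fun_prop

lemma Pq_eq_discrim_Fmap1 (v : VV p) :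
    Pq v = (Fmap1 v).2.1 ^ 2 - 4 * (Fmap1 v).1 * (Fmap1 v).2.2 := by
  simp only [Pq, Fmap1, Matrix.adjugate_fin_two, Matrix.det_fin_two, Matrix.sub_apply,
    Matrix.mul_apply, Fin.sum_univ_two, Matrix.of_apply, Matrix.cons_val', Matrix.cons_val_zero,
    Matrix.cons_val_one, Matrix.cons_val_fin_one]
  ring

end Levels

section Symmetry

instance : BorelSpace (Matrix (Fin 2) (Fin 2) ℚ_[p]) :=
  inferInstanceAs (BorelSpace (Fin 2 → Fin 2 → ℚ_[p]))

instance : SecondCountableTopology (Matrix (Fin 2) (Fin 2) ℚ_[p]) :=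
  inferInstanceAs (SecondCountableTopology (Fin 2 → Fin 2 → ℚ_[p]))

instance : LocallyCompactSpace (Matrix (Fin 2) (Fin 2) ℚ_[p]) :=
  inferInstanceAs (LocallyCompactSpace (Fin 2 → Fin 2 → ℚ_[p]))

variable (p) in
/-- The lattice `M₂(ℤ_p) × M₂(ℤ_p)` of integral cubes. -/
def intCubes : Set (VV p) := {v | (∀ i j, ‖v.1 i j‖ ≤ 1) ∧ (∀ i j, ‖v.2 i j‖ ≤ 1)}

lemma isClosed_intCubes : IsClosed (intCubes p) := by
  simp only [intCubes, ofPred_and, ofPred_forall]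
  refine IsClosed.inter ?_ ?_ <;>
    exact isClosed_iInter fun i => isClosed_iInter fun j =>
      isClosed_le (by fun_prop) continuous_const

/-- Exchange of the two rows of both faces of a cube. -/
def rowSwap : VV p ≃ₜ+ VV p where
  toFun v := (v.1.submatrix Fin.rev id, v.2.submatrix Fin.rev id)
  invFun v := (v.1.submatrix Fin.rev id, v.2.submatrix Fin.rev id)
  left_inv v := by simp [Fin.rev_involutive.comp_self]
  right_inv v := by simp [Fin.rev_involutive.comp_self]
  map_add' _ _ := rfl
  continuous_toFun := by fun_prop
  continuous_invFun := by fun_prop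

lemma rowSwap_apply (v : VV p) :
    rowSwap v = (v.1.submatrix Fin.rev id, v.2.submatrix Fin.rev id) := rfl

/-- Transposition of both faces of a cube; it exchanges `F₁` and `F₂`. -/
def transposeFaces : VV p ≃ₜ+ VV p where
  toFun v := (v.1ᵀ, v.2ᵀ)
  invFun v := (v.1ᵀ, v.2ᵀ)
  left_inv _ := rfl
  right_inv _ := rfl
  map_add' _ _ := rfl
  continuous_toFun := by fun_prop
  continuous_invFun := by fun_prop

lemma transposeFaces_apply (v : VV p) : transposeFaces v = (v.1ᵀ, v.2ᵀ) := rfl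

/-- Exchange of the two columns of both faces of a cube. -/
noncomputable def colSwap : VV p ≃ₜ+ VV p := (transposeFaces.trans rowSwap).trans transposeFaces

lemma transposeFaces_preimage_intCubes : transposeFaces ⁻¹' intCubes p = intCubes p := by
  ext v
  exact and_congr forall_comm forall_comm

lemma rowSwap_preimage_intCubes : rowSwap ⁻¹' intCubes p = intCubes p := by
  ext v
  exact and_congr (Fin.revPerm.forall_congr fun _ => Iff.rfl)
    (Fin.revPerm.forall_congr fun _ => Iff.rfl)

section MeasurePreserving

variable {μ : Measure (VV p)} [μ.IsAddHaarMeasure]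

lemma measurePreserving_transposeFaces (hμ : μ (intCubes p) = 1) :
    MeasurePreserving transposeFaces μ μ :=
  measurePreserving_of_measure_preimage_eq μ μ _ isClosed_intCubes.measurableSet hμ
    (by rw [transposeFaces_preimage_intCubes, hμ])

lemma measurePreserving_rowSwap (hμ : μ (intCubes p) = 1) : MeasurePreserving rowSwap μ μ :=
  measurePreserving_of_measure_preimage_eq μ μ _ isClosed_intCubes.measurableSet hμ
    (by rw [rowSwap_preimage_intCubes, hμ])

lemma measurePreserving_colSwap (hμ : μ (intCubes p) = 1) : MeasurePreserving colSwap μ μ :=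
  (measurePreserving_transposeFaces hμ).comp
    ((measurePreserving_rowSwap hμ).comp (measurePreserving_transposeFaces hμ))

end MeasurePreserving

lemma Fmap1_transposeFaces (v : VV p) : Fmap1 (transposeFaces v) = Fmap2 v := by
  rw [transposeFaces_apply]
  simp only [Fmap1, Fmap2, Matrix.transpose_apply, Prod.mk.injEq]
  refine ⟨?_, ?_, ?_⟩ <;> ring

lemma Fmap2_transposeFaces (v : VV p) : Fmap2 (transposeFaces v) = Fmap1 v :=
  (Fmap1_transposeFaces _).symm

lemma Fmap1_rowSwap (v : VV p) :
    Fmap1 (rowSwap v) = ((Fmap1 v).2.2, (Fmap1 v).2.1, (Fmap1 v).1) :=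
  Prod.ext rfl (Prod.ext (add_comm _ _) rfl)

lemma Fmap2_rowSwap (v : VV p) : Fmap2 (rowSwap v) = -Fmap2 v := by
  have h0 : Fin.rev (0 : Fin 2) = 1 := rfl
  have h1 : Fin.rev (1 : Fin 2) = 0 := rfl
  rw [rowSwap_apply]
  simp only [Fmap2, Matrix.submatrix_apply, id, h0, h1, Prod.neg_mk, Prod.mk.injEq]
  refine ⟨?_, ?_, ?_⟩ <;> ring

lemma Pq_transposeFaces (v : VV p) : Pq (transposeFaces v) = Pq v := by
  rw [Pq_eq_discrim_Fmap1, Fmap1_transposeFaces, Pq_eq_discrim_Fmap1]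
  simp only [Fmap1, Fmap2]
  ring

lemma Pq_rowSwap (v : VV p) : Pq (rowSwap v) = Pq v := by
  simp only [Pq_eq_discrim_Fmap1, Fmap1_rowSwap]
  ring

lemma Pq_eq_discrim_Fmap2 (v : VV p) :
    Pq v = (Fmap2 v).2.1 ^ 2 - 4 * (Fmap2 v).1 * (Fmap2 v).2.2 := by
  rw [← Pq_transposeFaces, Pq_eq_discrim_Fmap1, Fmap1_transposeFaces]

/-- The integral cubes `v` with `P(v) = D c²`, `|c| = p⁻ⁿ`, for which the vectors `F₁(v)` and
`F₂(v)` have norms `p^(-α)` and `p^(-β)`; the levels of such a cube are `n - α` and `n - β`. -/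
def stratum (D : ℚ_[p]) (n α β : ℤ) : Set (VV p) :=
  {v | v ∈ intCubes p ∧ Pq v ∈ sqShell D n ∧ mcoord (Fmap1 v) = (p : ℝ) ^ (-α) ∧
    mcoord (Fmap2 v) = (p : ℝ) ^ (-β)}

lemma measurableSet_stratum (D : ℚ_[p]) (n α β : ℤ) : MeasurableSet (stratum D n α β) :=
  isClosed_intCubes.measurableSet.inter <|
    (continuous_Pq.measurable (measurableSet_sqShell D n)).inter <|
      ((continuous_mcoord.comp continuous_Fmap1).measurable (measurableSet_singleton _)).inter <|
        (continuous_mcoord.comp continuous_Fmap2).measurable (measurableSet_singleton _)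

lemma transposeFaces_preimage_stratum (D : ℚ_[p]) (n α β : ℤ) :
    transposeFaces ⁻¹' stratum D n α β = stratum D n β α := by
  ext v
  have hlat : transposeFaces v ∈ intCubes p ↔ v ∈ intCubes p :=
    Set.ext_iff.1 transposeFaces_preimage_intCubes v
  simp only [stratum, mem_preimage, mem_ofPred_eq, hlat, Pq_transposeFaces, Fmap1_transposeFaces,
    Fmap2_transposeFaces, and_comm (a := mcoord (Fmap1 v) = _)]

lemma rowSwap_preimage_stratum (D : ℚ_[p]) (n α β : ℤ) :
    rowSwap ⁻¹' stratum D n α β = stratum D n α β := by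
  ext v
  have hlat : rowSwap v ∈ intCubes p ↔ v ∈ intCubes p :=
    Set.ext_iff.1 rowSwap_preimage_intCubes v
  simp only [stratum, mem_preimage, mem_ofPred_eq, hlat, Pq_rowSwap, Fmap1_rowSwap,
    Fmap2_rowSwap, mcoord_reverse, mcoord_neg, Prod.mk.eta]

lemma colSwap_preimage_stratum (D : ℚ_[p]) (n α β : ℤ) :
    colSwap ⁻¹' stratum D n α β = stratum D n α β := by
  change transposeFaces ⁻¹' (rowSwap ⁻¹' (transposeFaces ⁻¹' stratum D n α β)) = _
  rw [transposeFaces_preimage_stratum, rowSwap_preimage_stratum, transposeFaces_preimage_stratum]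

end Symmetry

section Corner

/-- The coordinates `((c, n₁, n₂, n₃), (δ, x, z, y))` of the cube with faces `(c n₃; n₁ x)` and
`(n₂ δ; y z)`. -/
def cubeCoords : VV p ≃ₜ+ Quad p × Quad p where
  toFun v := ((v.1 0 0, v.1 1 0, v.2 0 0, v.1 0 1), (v.2 0 1, v.1 1 1, v.2 1 1, v.2 1 0))
  invFun u := (!![u.1.1, u.1.2.2.2; u.1.2.1, u.2.2.1], !![u.1.2.2.1, u.2.1; u.2.2.2.2, u.2.2.2.1])
  left_inv v := by ext i j <;> fin_cases i <;> fin_cases j <;> rfl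
  right_inv _ := rfl
  map_add' _ _ := rfl
  continuous_toFun := by fun_prop
  continuous_invFun := by
    refine Continuous.prodMk ?_ ?_ <;>
      refine continuous_pi fun i => continuous_pi fun j => ?_ <;>
      fin_cases i <;> fin_cases j <;> dsimp <;> fun_prop

lemma mem_intCubes_iff {v : VV p} :
    v ∈ intCubes p ↔ (cubeCoords v).1 ∈ closedBall 0 1 ∧ (cubeCoords v).2 ∈ closedBall 0 1 := by
  simp only [mem_quad_unitBall_iff, intCubes, mem_ofPred_eq, Fin.forall_fin_two]
  change _ ↔ (‖v.1 0 0‖ ≤ 1 ∧ ‖v.1 1 0‖ ≤ 1 ∧ ‖v.2 0 0‖ ≤ 1 ∧ ‖v.1 0 1‖ ≤ 1) ∧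
    (‖v.2 0 1‖ ≤ 1 ∧ ‖v.1 1 1‖ ≤ 1 ∧ ‖v.2 1 1‖ ≤ 1 ∧ ‖v.2 1 0‖ ≤ 1)
  tauto

lemma measurePreserving_cubeCoords {μ : Measure (VV p)} [μ.IsAddHaarMeasure]
    (hμ : μ (intCubes p) = 1) :
    MeasurePreserving cubeCoords μ ((quadHaar p).prod (quadHaar p)) :=
  have : ((quadHaar p).prod (quadHaar p)).IsAddHaarMeasure :=
    Measure.prod.instIsAddHaarMeasure _ _
  measurePreserving_of_measure_preimage_eq μ _ cubeCoords
    (measurableSet_closedBall.prod measurableSet_closedBall)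
    (by rw [Measure.prod_prod, quadHaar_unitBall, one_mul])
    (by rw [← hμ]; exact congrArg μ (ext fun v => mem_intCubes_iff.symm))

/-- Linear part of the map sending the coordinates `(δ, x, z, y)` of a cube at a unit corner
`(c, n₁, n₂, n₃)` to those of the equivalent cube with corner `(1, 0, 0, 0)`. -/
noncomputable def cornerLinear (u : Quad p) (hu : u.1 ≠ 0) : Quad p ≃ₜ+ Quad p where
  toFun w := (w.1 / u.1, w.2.1,
    w.2.2.1 - (u.2.1 * w.1 + u.2.2.2 * w.2.2.2 + u.2.2.1 * w.2.1) / u.1, w.2.2.2)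
  invFun w := (u.1 * w.1, w.2.1,
    w.2.2.1 + (u.2.1 * (u.1 * w.1) + u.2.2.2 * w.2.2.2 + u.2.2.1 * w.2.1) / u.1, w.2.2.2)
  left_inv w := by
    refine Prod.ext ?_ (Prod.ext ?_ (Prod.ext ?_ ?_)) <;> simp [mul_div_cancel₀, hu]
  right_inv w := by
    refine Prod.ext ?_ (Prod.ext ?_ (Prod.ext ?_ ?_)) <;> simp [mul_div_cancel_left₀, hu]
  map_add' w w' := by
    refine Prod.ext ?_ (Prod.ext ?_ (Prod.ext ?_ ?_)) <;>
      simp only [Prod.fst_add, Prod.snd_add] <;> ring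
  continuous_toFun := by fun_prop
  continuous_invFun := by fun_prop

/-- Translation part of the map described at `cornerLinear`. -/
noncomputable def cornerShift (u : Quad p) : Quad p :=
  (-(u.2.2.1 * u.2.2.2) / u.1 ^ 2, -(u.2.1 * u.2.2.2) / u.1,
    2 * u.2.1 * u.2.2.1 * u.2.2.2 / u.1 ^ 2, -(u.2.1 * u.2.2.1) / u.1)

/-- The coordinates `(δ, x, z, y)` of the cube with corner `(1, 0, 0, 0)` that is equivalent to the
one with coordinates `(u, w)`. -/
noncomputable def cornerReduce (u : Quad p) (hu : u.1 ≠ 0) (w : Quad p) : Quad p :=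
  cornerLinear u hu w + cornerShift u

lemma div_mem_subring_of_norm_eq_one {a c : ℚ_[p]} (ha : a ∈ PadicInt.subring p) (hc : ‖c‖ = 1) :
    a / c ∈ PadicInt.subring p := by
  rwa [PadicInt.mem_subring_iff, norm_div, hc, div_one]

lemma mem_quad_unitBall_iff_subring {w : Quad p} : w ∈ closedBall (0 : Quad p) 1 ↔
    w.1 ∈ PadicInt.subring p ∧ w.2.1 ∈ PadicInt.subring p ∧ w.2.2.1 ∈ PadicInt.subring p ∧
      w.2.2.2 ∈ PadicInt.subring p :=
  mem_quad_unitBall_iff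

section CornerReduction

variable {u : Quad p} (hu : u.1 ≠ 0)

lemma cornerLinear_preimage_unitBall (hc : ‖u.1‖ = 1) (hu1 : u ∈ closedBall 0 1) :
    cornerLinear u hu ⁻¹' closedBall 0 1 = closedBall 0 1 := by
  obtain ⟨hc', hn1, hn2, hn3⟩ := mem_quad_unitBall_iff_subring.1 hu1
  have hshear {a b d : ℚ_[p]} (ha : a ∈ PadicInt.subring p) (hb : b ∈ PadicInt.subring p)
      (hd : d ∈ PadicInt.subring p) :
      (u.2.1 * a + u.2.2.2 * b + u.2.2.1 * d) / u.1 ∈ PadicInt.subring p :=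
    div_mem_subring_of_norm_eq_one
      (add_mem (add_mem (mul_mem hn1 ha) (mul_mem hn3 hb)) (mul_mem hn2 hd)) hc
  refine Subset.antisymm (fun w hw => ?_) fun w hw => ?_
  · rw [← (cornerLinear u hu).symm_apply_apply w]
    obtain ⟨h1, h2, h3, h4⟩ := mem_quad_unitBall_iff_subring.1 (mem_preimage.1 hw)
    have h1' := mul_mem hc' h1
    exact mem_quad_unitBall_iff_subring.2 ⟨h1', h2, add_mem h3 (hshear h1' h4 h2), h4⟩
  · obtain ⟨h1, h2, h3, h4⟩ := mem_quad_unitBall_iff_subring.1 hw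
    exact mem_quad_unitBall_iff_subring.2
      ⟨div_mem_subring_of_norm_eq_one h1 hc, h2, sub_mem h3 (hshear h1 h4 h2), h4⟩

lemma cornerShift_mem_unitBall (hc : ‖u.1‖ = 1) (hu1 : u ∈ closedBall 0 1) :
    cornerShift u ∈ closedBall 0 1 := by
  obtain ⟨-, hn1, hn2, hn3⟩ := mem_quad_unitBall_iff_subring.1 hu1
  have hc2 : ‖u.1 ^ 2‖ = 1 := by rw [norm_pow, hc, one_pow]
  have h2 : (2 : ℚ_[p]) ∈ PadicInt.subring p := ofNat_mem _ 2
  exact mem_quad_unitBall_iff_subring.2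
    ⟨div_mem_subring_of_norm_eq_one (neg_mem (mul_mem hn2 hn3)) hc2,
      div_mem_subring_of_norm_eq_one (neg_mem (mul_mem hn1 hn3)) hc,
      div_mem_subring_of_norm_eq_one (mul_mem (mul_mem (mul_mem h2 hn1) hn2) hn3) hc2,
      div_mem_subring_of_norm_eq_one (neg_mem (mul_mem hn1 hn2)) hc⟩

lemma quadHaar_cornerReduce_preimage (hc : ‖u.1‖ = 1) (hu1 : u ∈ closedBall 0 1) {S : Set (Quad p)}
    (hS : MeasurableSet S) : quadHaar p (cornerReduce u hu ⁻¹' S) = quadHaar p S := by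
  have hpres := quadHaar_measurePreserving _ (cornerLinear_preimage_unitBall hu hc hu1)
  change quadHaar p (cornerLinear u hu ⁻¹' ((· + cornerShift u) ⁻¹' S)) = _
  rw [hpres.measure_preimage (measurable_add_const _ hS).nullMeasurableSet,
    measure_preimage_add_right]

lemma cornerReduce_mem_unitBall_iff (hc : ‖u.1‖ = 1) (hu1 : u ∈ closedBall 0 1) {w : Quad p} :
    cornerReduce u hu w ∈ closedBall 0 1 ↔ w ∈ closedBall 0 1 := by
  have hlin := Set.ext_iff.1 (cornerLinear_preimage_unitBall hu hc hu1) w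
  have hshift := mem_quad_unitBall_iff_subring.1 (cornerShift_mem_unitBall hc hu1)
  rw [← hlin, mem_preimage, mem_quad_unitBall_iff_subring, mem_quad_unitBall_iff_subring]
  exact and_congr ((PadicInt.subring p).add_mem_cancel_right hshift.1) <|
    and_congr ((PadicInt.subring p).add_mem_cancel_right hshift.2.1) <|
    and_congr ((PadicInt.subring p).add_mem_cancel_right hshift.2.2.1)
      ((PadicInt.subring p).add_mem_cancel_right hshift.2.2.2)

lemma cornerReduce_apply (w : Quad p) : cornerReduce u hu w =
    (w.1 / u.1 + -(u.2.2.1 * u.2.2.2) / u.1 ^ 2, w.2.1 + -(u.2.1 * u.2.2.2) / u.1,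
      w.2.2.1 - (u.2.1 * w.1 + u.2.2.2 * w.2.2.2 + u.2.2.1 * w.2.1) / u.1 +
        2 * u.2.1 * u.2.2.1 * u.2.2.2 / u.1 ^ 2, w.2.2.2 + -(u.2.1 * u.2.2.1) / u.1) := rfl

lemma cubeCoords_symm_apply (u w : Quad p) : cubeCoords.symm (u, w) =
    (!![u.1, u.2.2.2; u.2.1, w.2.1], !![u.2.2.1, w.1; w.2.2.2, w.2.2.1]) := rfl

lemma Fmap1_cubeCoords_symm {r w : Quad p} (hr : cornerReduce u hu w = r) :
    Fmap1 (cubeCoords.symm (u, w)) =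
      (u.1 ^ 2 * r.1, u.1 * r.2.2.1 + 2 * (u.2.1 / u.1) * (u.1 ^ 2 * r.1),
        -(r.2.1 * r.2.2.2) + u.2.1 / u.1 * (u.1 * r.2.2.1) +
          (u.2.1 / u.1) ^ 2 * (u.1 ^ 2 * r.1)) := by
  rw [← hr, cornerReduce_apply, cubeCoords_symm_apply]
  simp only [Fmap1, of_apply, cons_val', cons_val_zero, cons_val_fin_one, cons_val_one,
    Prod.mk.injEq]
  refine ⟨?_, ?_, ?_⟩ <;> field_simp <;> ring

lemma Fmap2_cubeCoords_symm {r w : Quad p} (hr : cornerReduce u hu w = r) :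
    Fmap2 (cubeCoords.symm (u, w)) =
      (u.1 * r.2.2.2, u.1 * r.2.2.1 + 2 * (u.2.2.2 / u.1) * (u.1 * r.2.2.2),
        u.1 * -(r.1 * r.2.1) + u.2.2.2 / u.1 * (u.1 * r.2.2.1) +
          (u.2.2.2 / u.1) ^ 2 * (u.1 * r.2.2.2)) := by
  rw [← hr, cornerReduce_apply, cubeCoords_symm_apply]
  simp only [Fmap2, of_apply, cons_val', cons_val_zero, cons_val_fin_one, cons_val_one,
    Prod.mk.injEq]
  refine ⟨?_, ?_, ?_⟩ <;> field_simp <;> ring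

lemma Pq_cubeCoords_symm {r w : Quad p} (hr : cornerReduce u hu w = r) :
    Pq (cubeCoords.symm (u, w)) = u.1 ^ 2 * quadDisc r := by
  rw [Pq_eq_discrim_Fmap1, Fmap1_cubeCoords_symm hu hr, quadDisc]
  ring

lemma mcoord_Fmap1_cubeCoords_symm (hc : ‖u.1‖ = 1) (hu1 : u ∈ closedBall 0 1) {r w : Quad p}
    (hr : cornerReduce u hu w = r) :
    mcoord (Fmap1 (cubeCoords.symm (u, w))) = mcoord (r.1, r.2.2.1, -(r.2.1 * r.2.2.2)) := by
  rw [Fmap1_cubeCoords_symm hu hr, mcoord_shear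
    (div_mem_subring_of_norm_eq_one (mem_quad_unitBall_iff.1 hu1).2.1 hc)]
  simp only [mcoord, norm_mul, norm_pow, hc, one_pow, one_mul, norm_neg]

lemma mcoord_Fmap2_cubeCoords_symm (hc : ‖u.1‖ = 1) (hu1 : u ∈ closedBall 0 1) {r w : Quad p}
    (hr : cornerReduce u hu w = r) :
    mcoord (Fmap2 (cubeCoords.symm (u, w))) = mcoord (r.2.2.2, r.2.2.1, -(r.1 * r.2.1)) := by
  rw [Fmap2_cubeCoords_symm hu hr, mcoord_shear
    (div_mem_subring_of_norm_eq_one (mem_quad_unitBall_iff.1 hu1).2.2.2 hc)]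
  simp only [mcoord, norm_mul, hc, one_mul, norm_neg]

lemma norm_cornerReduce_le_iff (hc : ‖u.1‖ = 1) (hu1 : u ∈ closedBall 0 1) {t : ℝ}
    (hn1 : ‖u.2.1‖ ≤ t) {w : Quad p} : ‖(cornerReduce u hu w).2.1‖ ≤ t ↔ ‖w.2.1‖ ≤ t := by
  have hshift : ‖-(u.2.1 * u.2.2.2) / u.1‖ ≤ t := by
    rw [norm_div, hc, div_one, norm_neg, mul_comm]
    exact norm_mul_le_of_norm_le_one (mem_quad_unitBall_iff.1 hu1).2.2.2 hn1
  rw [cornerReduce_apply]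
  refine ⟨fun h => ?_, fun h => norm_add_le_of_le h hshift⟩
  simpa only [add_neg_cancel_right] using
    norm_add_le_of_le h (by rwa [norm_neg] : ‖-(-(u.2.1 * u.2.2.2) / u.1)‖ ≤ t)

/-- The cubes of a stratum whose first entry is a unit, the adjacent entry in its row being
divisible by `pᵃ` and the other row of that face by `pᵇ`. -/
def cornerStratum (D : ℚ_[p]) (n α β a b : ℤ) : Set (VV p) :=
  stratum D n α β ∩ {v | ‖v.1 0 0‖ = 1 ∧ ‖v.1 0 1‖ ≤ (p : ℝ) ^ (-a) ∧
    ‖v.1 1 0‖ ≤ (p : ℝ) ^ (-b) ∧ ‖v.1 1 1‖ ≤ (p : ℝ) ^ (-b)}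

lemma cubeCoords_symm_mem_cornerStratum_iff (hc : ‖u.1‖ = 1) (hu1 : u ∈ closedBall 0 1)
    {D : ℚ_[p]} {n α β a b : ℤ} (hn1 : ‖u.2.1‖ ≤ (p : ℝ) ^ (-b))
    (hn3 : ‖u.2.2.2‖ ≤ (p : ℝ) ^ (-a)) {w : Quad p} :
    cubeCoords.symm (u, w) ∈ cornerStratum D n α β a b ↔
      cornerReduce u hu w ∈ reducedLocus D n α β b := by
  have hP : u.1 ^ 2 * quadDisc (cornerReduce u hu w) ∈ sqShell D n ↔
      quadDisc (cornerReduce u hu w) ∈ sqShell D n := by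
    have h := mul_mem_sqShell_iff (D := D) (t := quadDisc (cornerReduce u hu w)) hu (n := n)
      (m := 0) (by rw [hc, neg_zero, zpow_zero])
    rwa [add_zero] at h
  have hentries : cubeCoords.symm (u, w) ∈ {v : VV p | ‖v.1 0 0‖ = 1 ∧
      ‖v.1 0 1‖ ≤ (p : ℝ) ^ (-a) ∧ ‖v.1 1 0‖ ≤ (p : ℝ) ^ (-b) ∧ ‖v.1 1 1‖ ≤ (p : ℝ) ^ (-b)} ↔
      ‖w.2.1‖ ≤ (p : ℝ) ^ (-b) :=
    ⟨fun h => h.2.2.2, fun h => ⟨hc, hn3, hn1, h⟩⟩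
  rw [cornerStratum, mem_inter_iff, hentries]
  simp only [stratum, reducedLocus, mem_ofPred_eq, mem_intCubes_iff,
    ContinuousAddEquiv.apply_symm_apply, Pq_cubeCoords_symm hu rfl, hP, hu1, true_and,
    mcoord_Fmap1_cubeCoords_symm hu hc hu1 rfl, mcoord_Fmap2_cubeCoords_symm hu hc hu1 rfl,
    cornerReduce_mem_unitBall_iff hu hc hu1, norm_cornerReduce_le_iff hu hc hu1 hn1]
  tauto

end CornerReduction

lemma measurableSet_reducedLocus (D : ℚ_[p]) (n α β a : ℤ) :
    MeasurableSet (reducedLocus D n α β a) := by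
  simp only [reducedLocus, ofPred_and]
  refine measurableSet_closedBall.inter (.inter ?_ (.inter ?_ (.inter ?_ ?_)))
  · exact measurableSet_le (by fun_prop) measurable_const
  · exact continuous_quadDisc.measurable (measurableSet_sqShell D n)
  all_goals
    refine measurableSet_eq_fun (Continuous.measurable ?_) measurable_const
    exact continuous_mcoord.comp (by fun_prop)

lemma measurableSet_cornerStratum (D : ℚ_[p]) (n α β a b : ℤ) :
    MeasurableSet (cornerStratum D n α β a b) := by
  simp only [cornerStratum, ofPred_and]
  refine (measurableSet_stratum D n α β).inter (.inter ?_ (.inter ?_ (.inter ?_ ?_)))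
  · exact (isClosed_eq (by fun_prop) continuous_const).measurableSet
  all_goals exact (isClosed_le (by fun_prop) continuous_const).measurableSet

variable (p) in
/-- The corners `(c, n₁, n₂, n₃)` that occur in `cornerStratum`. -/
def cornerBox (a b : ℤ) : Set (Quad p) :=
  sphere 0 1 ×ˢ closedBall 0 ((p : ℝ) ^ (-b)) ×ˢ closedBall 0 1 ×ˢ closedBall 0 ((p : ℝ) ^ (-a))

lemma mem_cornerBox_iff {a b : ℤ} {u : Quad p} : u ∈ cornerBox p a b ↔
    ‖u.1‖ = 1 ∧ ‖u.2.1‖ ≤ (p : ℝ) ^ (-b) ∧ ‖u.2.2.1‖ ≤ 1 ∧ ‖u.2.2.2‖ ≤ (p : ℝ) ^ (-a) := by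
  simp only [cornerBox, mem_prod, mem_sphere_zero_iff_norm, mem_closedBall_zero_iff]

lemma measurableSet_cornerBox (a b : ℤ) : MeasurableSet (cornerBox p a b) :=
  isClosed_sphere.measurableSet.prod <| measurableSet_closedBall.prod <|
    measurableSet_closedBall.prod measurableSet_closedBall

lemma quadHaar_cornerBox (a b : ℤ) : quadHaar p (cornerBox p a b) =
    ENNReal.ofReal ((1 - (p : ℝ)⁻¹) * ((p : ℝ) ^ (-b) * (p : ℝ) ^ (-a))) := by
  have hsphere := padicHaar_sphere (p := p) 0
  rw [neg_zero, zpow_zero, mul_one] at hsphere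
  rw [cornerBox, quadHaar, Measure.prod_prod, Measure.prod_prod, Measure.prod_prod, hsphere,
    padicHaar_unitBall, one_mul, padicHaar_closedBall, padicHaar_closedBall,
    ENNReal.ofReal_mul one_sub_inv_pos.le, ENNReal.ofReal_mul (by positivity)]

lemma measure_cornerStratum {μ : Measure (VV p)} [μ.IsAddHaarMeasure] (hμ : μ (intCubes p) = 1)
    (D : ℚ_[p]) (n α β : ℤ) {a b : ℤ} (ha : 0 ≤ a) (hb : 0 ≤ b) :
    μ (cornerStratum D n α β a b) =
      ENNReal.ofReal ((1 - (p : ℝ)⁻¹) * ((p : ℝ) ^ (-b) * (p : ℝ) ^ (-a))) *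
        quadHaar p (reducedLocus D n α β b) := by
  have hmeas : MeasurableSet (cubeCoords.symm ⁻¹' cornerStratum D n α β a b) :=
    cubeCoords.symm.continuous.measurable (measurableSet_cornerStratum D n α β a b)
  have hpull : cornerStratum D n α β a b =
      cubeCoords ⁻¹' (cubeCoords.symm ⁻¹' cornerStratum D n α β a b) := by
    ext v
    simp only [mem_preimage, ContinuousAddEquiv.symm_apply_apply]
  rw [hpull, (measurePreserving_cubeCoords hμ).measure_preimage hmeas.nullMeasurableSet,
    ← quadHaar_cornerBox]
  refine measure_prod_of_fiber_const _ _ hmeas (measurableSet_cornerBox a b) (fun u hu => ?_)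
    fun u hu => eq_empty_of_forall_notMem fun w hw => hu ?_
  · obtain ⟨hc, hn1, hn2, hn3⟩ := mem_cornerBox_iff.1 hu
    have hu1 : u ∈ closedBall 0 1 := mem_quad_unitBall_iff.2
      ⟨hc.le, hn1.trans (zpow_neg_le_one_iff.2 hb), hn2, hn3.trans (zpow_neg_le_one_iff.2 ha)⟩
    have hu0 : u.1 ≠ 0 := norm_ne_zero_iff.1 (hc ▸ one_ne_zero)
    rw [← quadHaar_cornerReduce_preimage hu0 hc hu1 (measurableSet_reducedLocus D n α β b)]
    exact congrArg _ (ext fun w => cubeCoords_symm_mem_cornerStratum_iff hu0 hc hu1 hn1 hn3)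
  · obtain ⟨hs, h00, h01, h10, -⟩ := hw
    exact mem_cornerBox_iff.2 ⟨h00, h10, hs.1.2 0 0, h01⟩

end Corner

section StratumVolume

lemma one_sub_inv_sq_pos : 0 < 1 - (p : ℝ)⁻¹ ^ 2 := by
  have hp : (p : ℝ)⁻¹ < 1 := sub_pos.1 one_sub_inv_pos
  exact sub_pos.2 (pow_lt_one₀ (by positivity) hp two_ne_zero)

/-- The cubes whose first face has a unit in row `i`. -/
def unitRow (i : Fin 2) : Set (VV p) := {v | ∃ j, ‖v.1 i j‖ = 1}

/-- The cubes whose first face is not divisible by `p`, provided that they are integral. -/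
def primitiveFace : Set (VV p) := unitRow 0 ∪ unitRow 1

lemma mem_primitiveFace_iff {v : VV p} : v ∈ primitiveFace ↔ ∃ i j, ‖v.1 i j‖ = 1 :=
  (Fin.exists_fin_two (p := fun i => v ∈ unitRow i)).symm

/-- The cubes for which the entry `(i, j)` of the first face is a unit. -/
def unitEntry (i j : Fin 2) : Set (VV p) := {v | ‖v.1 i j‖ = 1}

lemma measurableSet_unitEntry (i j : Fin 2) : MeasurableSet (unitEntry (p := p) i j) :=
  (isClosed_eq (by fun_prop) continuous_const).measurableSet

lemma unitRow_eq_union (i : Fin 2) : unitRow (p := p) i = unitEntry i 0 ∪ unitEntry i 1 := by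
  ext v
  exact Fin.exists_fin_two

lemma measurableSet_unitRow (i : Fin 2) : MeasurableSet (unitRow (p := p) i) := by
  rw [unitRow_eq_union]
  exact (measurableSet_unitEntry i 0).union (measurableSet_unitEntry i 1)

lemma colSwap_preimage_unitRow (i : Fin 2) : colSwap ⁻¹' unitRow (p := p) i = unitRow i := by
  ext v
  exact Fin.revPerm.exists_congr fun _ => Iff.rfl

lemma notMem_unitEntry_iff {v : VV p} (hv : v ∈ intCubes p) (i j : Fin 2) :
    v ∉ unitEntry i j ↔ ‖v.1 i j‖ ≤ (p : ℝ) ^ (-1 : ℤ) := by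
  rw [_root_.zpow_neg_one, ← norm_lt_one_iff_norm_le_inv]
  exact (hv.1 i j).lt_iff_ne.symm

lemma notMem_unitRow_iff {v : VV p} (hv : v ∈ intCubes p) (i : Fin 2) :
    v ∉ unitRow i ↔ ∀ j, ‖v.1 i j‖ ≤ (p : ℝ) ^ (-1 : ℤ) :=
  not_exists.trans (forall_congr' (notMem_unitEntry_iff hv i))

section Corners

variable (D : ℚ_[p]) (n α β : ℤ)

lemma stratum_inter_unitEntry :
    stratum D n α β ∩ unitEntry 0 0 = cornerStratum D n α β 0 0 := by
  ext v
  refine and_congr_right fun hv => ⟨fun h => ?_, fun h => h.1⟩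
  simp only [mem_ofPred_eq, neg_zero, zpow_zero]
  exact ⟨h, hv.1.1 0 1, hv.1.1 1 0, hv.1.1 1 1⟩

lemma stratum_inter_unitEntry_sdiff :
    stratum D n α β ∩ (unitEntry 0 0 \ unitEntry 0 1) = cornerStratum D n α β 1 0 := by
  ext v
  refine and_congr_right fun hv => and_congr_right fun _ => ?_
  rw [notMem_unitEntry_iff hv.1, neg_zero, zpow_zero, iff_self_and]
  exact fun _ => ⟨hv.1.1 1 0, hv.1.1 1 1⟩

lemma stratum_sdiff_unitRow_inter_unitEntry :
    (stratum D n α β \ unitRow 1) ∩ unitEntry 0 0 = cornerStratum D n α β 0 1 := by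
  ext v
  constructor
  · rintro ⟨⟨hv, hrow⟩, h⟩
    have hrow' := (notMem_unitRow_iff hv.1 1).1 hrow
    exact ⟨hv, h, by simpa only [neg_zero, zpow_zero] using hv.1.1 0 1, hrow' 0, hrow' 1⟩
  · rintro ⟨hv, h, -, h10, h11⟩
    exact ⟨⟨hv, (notMem_unitRow_iff hv.1 1).2 (Fin.forall_fin_two.2 ⟨h10, h11⟩)⟩, h⟩

lemma stratum_sdiff_unitRow_inter_unitEntry_sdiff :
    (stratum D n α β \ unitRow 1) ∩ (unitEntry 0 0 \ unitEntry 0 1) =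
      cornerStratum D n α β 1 1 := by
  ext v
  constructor
  · rintro ⟨⟨hv, hrow⟩, h, h01⟩
    have hrow' := (notMem_unitRow_iff hv.1 1).1 hrow
    exact ⟨hv, h, (notMem_unitEntry_iff hv.1 0 1).1 h01, hrow' 0, hrow' 1⟩
  · rintro ⟨hv, h, h01, h10, h11⟩
    exact ⟨⟨hv, (notMem_unitRow_iff hv.1 1).2 (Fin.forall_fin_two.2 ⟨h10, h11⟩)⟩, h,
      (notMem_unitEntry_iff hv.1 0 1).2 h01⟩

end Corners

lemma measure_stratum_inter_primitiveFace {μ : Measure (VV p)} [μ.IsAddHaarMeasure]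
    (hμ : μ (intCubes p) = 1) (D : ℚ_[p]) (n α β : ℤ) :
    μ (stratum D n α β ∩ primitiveFace) =
      μ (cornerStratum D n α β 0 0) + μ (cornerStratum D n α β 1 0) +
        (μ (cornerStratum D n α β 0 1) + μ (cornerStratum D n α β 1 1)) := by
  have hS := measurableSet_stratum D n α β
  have hrow := measure_inter_union_of_swap (measurePreserving_rowSwap hμ) hS
    (measurableSet_unitRow 0) (measurableSet_unitRow 1) (rowSwap_preimage_stratum D n α β) rfl rfl
  have hcol {T : Set (VV p)} (hT : MeasurableSet T) (hswap : colSwap ⁻¹' T = T) :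
      μ (T ∩ unitRow 0) = μ (T ∩ unitEntry 0 0) + μ (T ∩ (unitEntry 0 0 \ unitEntry 0 1)) := by
    rw [unitRow_eq_union]
    exact measure_inter_union_of_swap (measurePreserving_colSwap hμ) hT
      (measurableSet_unitEntry 0 0) (measurableSet_unitEntry 0 1) hswap rfl rfl
  rw [primitiveFace, hrow, ← inter_sdiff_assoc, ← sdiff_inter_right_comm,
    hcol hS (colSwap_preimage_stratum D n α β), hcol (hS.diff (measurableSet_unitRow 1))
      (by rw [preimage_sdiff, colSwap_preimage_stratum, colSwap_preimage_unitRow]),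
    stratum_inter_unitEntry, stratum_inter_unitEntry_sdiff,
    stratum_sdiff_unitRow_inter_unitEntry, stratum_sdiff_unitRow_inter_unitEntry_sdiff]

lemma measure_stratum_inter_primitiveFace_of_le {μ : Measure (VV p)} [μ.IsAddHaarMeasure]
    (hμ : μ (intCubes p) = 1) (hodd : Odd p) {D : ℚ_[p]} (hD : ‖D‖ = 1) (hDs : ¬ IsSquare D)
    {n α β : ℤ} (hα : 0 ≤ α) (hαβ : α ≤ β) (hβ : β ≤ n) :
    μ (stratum D n α β ∩ primitiveFace) =
      ENNReal.ofReal ((1 - (p : ℝ)⁻¹ ^ 2) * (shellMass p n *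
        ((p : ℝ) ^ (-β) * (levelFactor p n α * levelFactor p n β)))) := by
  have hp : (0 : ℝ) ≤ (p : ℝ)⁻¹ := by positivity
  have hfac : ENNReal.ofReal (1 - (p : ℝ)⁻¹ ^ 2) =
      ENNReal.ofReal (1 - (p : ℝ)⁻¹) * (1 + ENNReal.ofReal (p : ℝ)⁻¹) := by
    rw [← ENNReal.ofReal_one, ← ENNReal.ofReal_add zero_le_one hp,
      ← ENNReal.ofReal_mul one_sub_inv_pos.le]
    congr 1
    ring
  rw [ENNReal.ofReal_mul one_sub_inv_sq_pos.le, ← quadHaar_reducedLocus hodd hD hDs hα hαβ hβ, hfac,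
    measure_stratum_inter_primitiveFace hμ]
  simp only [measure_cornerStratum hμ, le_refl, zero_le_one, neg_zero, zpow_zero, mul_one, one_mul,
    _root_.zpow_neg_one, ENNReal.ofReal_mul one_sub_inv_pos.le, ENNReal.ofReal_mul hp]
  ring

lemma transposeFaces_preimage_primitiveFace :
    transposeFaces ⁻¹' primitiveFace = primitiveFace (p := p) := by
  ext v
  rw [mem_preimage, mem_primitiveFace_iff, mem_primitiveFace_iff]
  exact exists_comm

/-- The number of vertices at distance `l` from a vertex of the `(p + 1)`-regular tree. -/
noncomputable def sphereCard (p l : ℕ) : ℝ := if l = 0 then 1 else (p : ℝ) ^ l + (p : ℝ) ^ (l - 1)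

lemma levelFactor_sub (n : ℤ) (l : ℕ) :
    levelFactor p n (n - l) = (p : ℝ) ^ (-(l : ℤ)) * sphereCard p l := by
  rcases Nat.eq_zero_or_pos l with rfl | hl
  · simp [levelFactor, sphereCard]
  · obtain ⟨k, rfl⟩ := Nat.exists_eq_add_of_lt hl
    rw [levelFactor, if_pos (by omega), sphereCard, if_neg (by omega), _root_.zpow_neg,
      zpow_natCast, zero_add, Nat.add_sub_cancel, pow_succ]
    field_simp [natCast_prime_ne_zero (p := p)]

end StratumVolume

section StratumRecursion

variable (p) in
/-- The constant `(1/2) (1 - p⁻¹)³ (1 - p⁻²)` common to the volumes of all strata. -/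
noncomputable def stratumConst : ℝ := (1 - (p : ℝ)⁻¹ ^ 2) * ((1 - (p : ℝ)⁻¹) ^ 3 / 2)

lemma stratumConst_pos : 0 < stratumConst p :=
  mul_pos one_sub_inv_sq_pos (half_pos (pow_pos one_sub_inv_pos 3))

variable {μ : Measure (VV p)} [μ.IsAddHaarMeasure]

lemma measure_stratum_inter_primitiveFace_of_levels_le (hμ : μ (intCubes p) = 1) (hodd : Odd p)
    {D : ℚ_[p]} (hD : ‖D‖ = 1) (hDs : ¬ IsSquare D) {n : ℤ} {A B : ℕ} (hBA : B ≤ A)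
    (hA : (A : ℤ) ≤ n) :
    μ (stratum D n (n - A) (n - B) ∩ primitiveFace) =
      ENNReal.ofReal (stratumConst p * (p : ℝ) ^ (-(3 * n)) *
        (sphereCard p A * sphereCard p B * (p : ℝ) ^ (-(A : ℤ)))) := by
  rw [measure_stratum_inter_primitiveFace_of_le hμ hodd hD hDs (by omega) (by omega) (by omega),
    levelFactor_sub, levelFactor_sub]
  congr 1
  have hexp : (p : ℝ) ^ (-(2 * n)) * (p : ℝ) ^ (-(n - B)) * (p : ℝ) ^ (-(B : ℤ)) =
      (p : ℝ) ^ (-(3 * n)) := by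
    rw [← zpow_add₀ natCast_prime_ne_zero, ← zpow_add₀ natCast_prime_ne_zero]
    congr 1
    ring
  rw [stratumConst, shellMass, ← hexp]
  ring

lemma measurableSet_primitiveFace : MeasurableSet (primitiveFace (p := p)) :=
  (measurableSet_unitRow 0).union (measurableSet_unitRow 1)

lemma measure_stratum_inter_primitiveFace_eq (hμ : μ (intCubes p) = 1) (hodd : Odd p)
    {D : ℚ_[p]} (hD : ‖D‖ = 1) (hDs : ¬ IsSquare D) {n : ℤ} {A B : ℕ}
    (hn : ((max A B : ℕ) : ℤ) ≤ n) :
    μ (stratum D n (n - A) (n - B) ∩ primitiveFace) =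
      ENNReal.ofReal (stratumConst p * (p : ℝ) ^ (-(3 * n)) *
        (sphereCard p A * sphereCard p B * (p : ℝ) ^ (-((max A B : ℕ) : ℤ)))) := by
  rcases le_total B A with h | h
  · rw [max_eq_left h] at hn ⊢
    exact measure_stratum_inter_primitiveFace_of_levels_le hμ hodd hD hDs h hn
  · rw [max_eq_right h] at hn ⊢
    have hmeas : NullMeasurableSet (stratum D n (n - A) (n - B) ∩ primitiveFace) μ :=
      ((measurableSet_stratum D n _ _).inter measurableSet_primitiveFace).nullMeasurableSet
    rw [← (measurePreserving_transposeFaces hμ).measure_preimage hmeas, preimage_inter,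
      transposeFaces_preimage_stratum, transposeFaces_preimage_primitiveFace,
      measure_stratum_inter_primitiveFace_of_levels_le hμ hodd hD hDs h hn,
      mul_comm (sphereCard p A)]

/-- Multiplication of the first face of a cube by `p`. -/
noncomputable def scaleFace : VV p ≃ₜ+ VV p where
  toFun v := ((p : ℚ_[p]) • v.1, v.2)
  invFun v := ((p : ℚ_[p])⁻¹ • v.1, v.2)
  left_inv v := by simp [smul_smul]
  right_inv v := by simp [smul_smul]
  map_add' v w := by simp
  continuous_toFun := by fun_prop
  continuous_invFun := by fun_prop

lemma scaleFace_apply (v : VV p) : scaleFace v = ((p : ℚ_[p]) • v.1, v.2) := rfl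

lemma Fmap1_scaleFace (v : VV p) : Fmap1 (scaleFace v) = (p : ℚ_[p]) • Fmap1 v := by
  simp only [Fmap1, scaleFace_apply, Matrix.smul_apply, smul_eq_mul, Prod.smul_mk, Prod.mk.injEq]
  refine ⟨?_, ?_, ?_⟩ <;> ring

lemma Fmap2_scaleFace (v : VV p) : Fmap2 (scaleFace v) = (p : ℚ_[p]) • Fmap2 v := by
  simp only [Fmap2, scaleFace_apply, Matrix.smul_apply, smul_eq_mul, Prod.smul_mk, Prod.mk.injEq]
  refine ⟨?_, ?_, ?_⟩ <;> ring

lemma Pq_scaleFace (v : VV p) : Pq (scaleFace v) = (p : ℚ_[p]) ^ 2 * Pq v := by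
  rw [Pq_eq_discrim_Fmap1, Fmap1_scaleFace, Pq_eq_discrim_Fmap1]
  simp only [Prod.smul_fst, Prod.smul_snd, smul_eq_mul]
  ring

lemma mcoord_natCast_smul_eq_iff {t : ℚ_[p] × ℚ_[p] × ℚ_[p]} {k : ℤ} :
    mcoord ((p : ℚ_[p]) • t) = (p : ℝ) ^ (-k) ↔ mcoord t = (p : ℝ) ^ (-(k - 1)) := by
  have hk : (p : ℝ) ^ (-k) = (p : ℝ)⁻¹ * (p : ℝ) ^ (-(k - 1)) := by
    rw [← _root_.zpow_neg_one, ← zpow_add₀ natCast_prime_ne_zero]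
    congr 1
    ring
  rw [mcoord_smul, Padic.norm_p, hk,
    mul_right_inj' (inv_ne_zero natCast_prime_ne_zero)]

variable (p) in
/-- The integral cubes whose first face is divisible by `p`. -/
def divisibleCubes : Set (VV p) :=
  {v | (∀ i j, ‖v.1 i j‖ ≤ (p : ℝ)⁻¹) ∧ ∀ i j, ‖v.2 i j‖ ≤ 1}

lemma intCubes_sdiff_primitiveFace : intCubes p \ primitiveFace = divisibleCubes p := by
  have hinv : (p : ℝ)⁻¹ ≤ 1 := (sub_pos.1 one_sub_inv_pos).le
  ext v
  simp only [mem_sdiff, mem_primitiveFace_iff, not_exists]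
  constructor
  · rintro ⟨hv, hne⟩
    exact ⟨fun i j => norm_lt_one_iff_norm_le_inv.1 ((hv.1 i j).lt_of_ne (hne i j)), hv.2⟩
  · rintro ⟨h1, h2⟩
    exact ⟨⟨fun i j => (h1 i j).trans hinv, h2⟩,
      fun i j => (norm_lt_one_iff_norm_le_inv.2 (h1 i j)).ne⟩

lemma scaleFace_preimage_divisibleCubes : scaleFace ⁻¹' divisibleCubes p = intCubes p := by
  have hp : (0 : ℝ) < (p : ℝ)⁻¹ := inv_pos.2 natCast_prime_pos
  ext v
  simp only [mem_preimage, divisibleCubes, intCubes, mem_ofPred_eq, scaleFace_apply,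
    Matrix.smul_apply, smul_eq_mul, norm_mul, Padic.norm_p, mul_le_iff_le_one_right hp]

lemma measurableSet_divisibleCubes : MeasurableSet (divisibleCubes p) := by
  rw [← intCubes_sdiff_primitiveFace]
  exact isClosed_intCubes.measurableSet.diff measurableSet_primitiveFace

lemma measure_divisibleCubes (hμ : μ (intCubes p) = 1) :
    μ (divisibleCubes p) = ENNReal.ofReal ((p : ℝ)⁻¹ ^ 4) := by
  set B : Set ℚ_[p] := closedBall 0 1
  set C : Set ℚ_[p] := closedBall 0 (p : ℝ)⁻¹ with hC
  have hdiv : divisibleCubes p = cubeCoords ⁻¹' ((C ×ˢ C ×ˢ B ×ˢ C) ×ˢ (B ×ˢ C ×ˢ B ×ˢ B)) := by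
    ext v
    simp only [divisibleCubes, mem_ofPred_eq, Fin.forall_fin_two, mem_preimage, mem_prod, B, C,
      mem_closedBall_zero_iff]
    change _ ↔ (‖v.1 0 0‖ ≤ _ ∧ ‖v.1 1 0‖ ≤ _ ∧ ‖v.2 0 0‖ ≤ 1 ∧ ‖v.1 0 1‖ ≤ _) ∧
      ‖v.2 0 1‖ ≤ 1 ∧ ‖v.1 1 1‖ ≤ _ ∧ ‖v.2 1 1‖ ≤ 1 ∧ ‖v.2 1 0‖ ≤ 1
    tauto
  have hvol : padicHaar p C = ENNReal.ofReal (p : ℝ)⁻¹ := by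
    rw [hC, ← _root_.zpow_neg_one, padicHaar_closedBall]
  have hBmeas : MeasurableSet B := measurableSet_closedBall
  have hCmeas : MeasurableSet C := measurableSet_closedBall
  rw [hdiv, (measurePreserving_cubeCoords hμ).measure_preimage
    ((hCmeas.prod (hCmeas.prod (hBmeas.prod hCmeas))).prod
      (hBmeas.prod (hCmeas.prod (hBmeas.prod hBmeas)))).nullMeasurableSet]
  simp only [quadHaar, Measure.prod_prod, hvol, B, padicHaar_unitBall]
  rw [ENNReal.ofReal_pow (by positivity)]
  ring

lemma measure_eq_mul_measure_scaleFace_preimage (hμ : μ (intCubes p) = 1) {S : Set (VV p)}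
    (hS : MeasurableSet S) :
    μ S = ENNReal.ofReal ((p : ℝ)⁻¹ ^ 4) * μ (scaleFace ⁻¹' S) := by
  have h := measure_preimage_mul_eq μ μ scaleFace (L := divisibleCubes p)
    measurableSet_divisibleCubes hS
  rw [scaleFace_preimage_divisibleCubes, hμ, one_mul, measure_divisibleCubes hμ] at h
  rw [← h, mul_comm]

lemma scaleFace_preimage_stratum_sdiff (D : ℚ_[p]) (n α β : ℤ) :
    scaleFace ⁻¹' (stratum D n α β \ primitiveFace) = stratum D (n - 1) (α - 1) (β - 1) := by
  have hlat (v : VV p) : (scaleFace v ∈ intCubes p ∧ scaleFace v ∉ primitiveFace) ↔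
      v ∈ intCubes p := by
    rw [← mem_sdiff, intCubes_sdiff_primitiveFace, ← mem_preimage,
      scaleFace_preimage_divisibleCubes]
  have hP (v : VV p) : (p : ℚ_[p]) ^ 2 * Pq v ∈ sqShell D n ↔ Pq v ∈ sqShell D (n - 1) := by
    have h := mul_mem_sqShell_iff (D := D) (t := Pq v) natCast_padic_ne_zero (n := n - 1) (m := 1)
      (by rw [Padic.norm_p, _root_.zpow_neg_one])
    rwa [sub_add_cancel] at h
  ext v
  simp only [mem_preimage, mem_sdiff, stratum, mem_ofPred_eq, Pq_scaleFace, Fmap1_scaleFace,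
    Fmap2_scaleFace, hP, mcoord_natCast_smul_eq_iff, ← hlat v]
  tauto

lemma measure_stratum_eq_add (hμ : μ (intCubes p) = 1) (D : ℚ_[p]) (n α β : ℤ) :
    μ (stratum D n α β) = μ (stratum D n α β ∩ primitiveFace) +
      ENNReal.ofReal ((p : ℝ)⁻¹ ^ 4) * μ (stratum D (n - 1) (α - 1) (β - 1)) := by
  rw [← measure_inter_add_sdiff (stratum D n α β) measurableSet_primitiveFace,
    measure_eq_mul_measure_scaleFace_preimage hμ
      ((measurableSet_stratum D n α β).diff measurableSet_primitiveFace),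
    scaleFace_preimage_stratum_sdiff]

lemma mcoord_Fmap1_le_one {v : VV p} (hv : v ∈ intCubes p) : mcoord (Fmap1 v) ≤ 1 := by
  have h1 (i j) : v.1 i j ∈ PadicInt.subring p := hv.1 i j
  have h2 (i j) : v.2 i j ∈ PadicInt.subring p := hv.2 i j
  have hdet (i j k l) : v.1 i j * v.2 k l - v.1 i l * v.2 k j ∈ PadicInt.subring p :=
    sub_mem (mul_mem (h1 _ _) (h2 _ _)) (mul_mem (h1 _ _) (h2 _ _))
  exact mcoord_le_iff.2 ⟨hdet 0 0 0 1, add_mem (hdet 0 0 1 1) (hdet 1 0 0 1), hdet 1 0 1 1⟩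

lemma mcoord_Fmap2_le_one {v : VV p} (hv : v ∈ intCubes p) : mcoord (Fmap2 v) ≤ 1 := by
  rw [← Fmap1_transposeFaces]
  exact mcoord_Fmap1_le_one ((Set.ext_iff.1 transposeFaces_preimage_intCubes v).2 hv)

lemma stratum_eq_empty {D : ℚ_[p]} {n α β : ℤ} (h : α < 0 ∨ β < 0) : stratum D n α β = ∅ := by
  refine eq_empty_of_forall_notMem fun v ⟨hv, _, h1, h2⟩ => ?_
  have hα := zpow_neg_le_one_iff.1 (h1 ▸ mcoord_Fmap1_le_one hv)
  have hβ := zpow_neg_le_one_iff.1 (h2 ▸ mcoord_Fmap2_le_one hv)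
  omega

lemma sphereCard_nonneg (p l : ℕ) : 0 ≤ sphereCard p l := by
  unfold sphereCard
  positivity

lemma sum_Ico_pow_succ {x : ℝ} {m k : ℕ} (h : m ≤ k) :
    ∑ M ∈ Finset.Ico m (k + 1), x ^ M = x ^ m + x * ∑ M ∈ Finset.Ico m k, x ^ M := by
  rw [Finset.sum_eq_sum_Ico_succ_bot (Nat.lt_succ_of_le h), Finset.mul_sum,
    ← Finset.sum_Ico_add']
  simp only [pow_succ']

lemma measure_stratum_sub_one (hμ : μ (intCubes p) = 1) (hodd : Odd p) {D : ℚ_[p]} (hD : ‖D‖ = 1)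
    (hDs : ¬ IsSquare D) (k A B : ℕ) :
    μ (stratum D (k - 1) (k - 1 - A) (k - 1 - B)) =
      ENNReal.ofReal (stratumConst p * (p : ℝ) ^ (-(3 * ((k : ℤ) - 1))) *
        (sphereCard p A * sphereCard p B * ∑ M ∈ Finset.Ico (max A B) k, (p : ℝ)⁻¹ ^ M)) := by
  induction k with
  | zero =>
    rw [stratum_eq_empty (by omega), measure_empty, Finset.Ico_eq_empty_of_le (Nat.zero_le _),
      Finset.sum_empty, mul_zero, mul_zero, ENNReal.ofReal_zero]
  | succ k ih =>
    rw [Nat.cast_succ, add_sub_cancel_right]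
    rcases lt_or_ge k (max A B) with hlt | hle
    · rw [stratum_eq_empty (by omega), measure_empty, Finset.Ico_eq_empty_of_le hlt,
        Finset.sum_empty, mul_zero, mul_zero, ENNReal.ofReal_zero]
    have hC := stratumConst_pos (p := p)
    have hA := sphereCard_nonneg p A
    have hB := sphereCard_nonneg p B
    rw [measure_stratum_eq_add hμ, measure_stratum_inter_primitiveFace_eq hμ hodd hD hDs
      (mod_cast hle), sub_right_comm (k : ℤ) A 1, sub_right_comm (k : ℤ) B 1, ih,
      ← ENNReal.ofReal_mul (by positivity), ← ENNReal.ofReal_add (by positivity) (by positivity),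
      sum_Ico_pow_succ hle]
    congr 1
    have hexp : (p : ℝ)⁻¹ ^ 4 * (p : ℝ) ^ (-(3 * ((k : ℤ) - 1))) =
        (p : ℝ)⁻¹ * (p : ℝ) ^ (-(3 * (k : ℤ))) := by
      rw [← _root_.zpow_neg_one, ← zpow_natCast, ← _root_.zpow_mul,
        ← zpow_add₀ natCast_prime_ne_zero, ← zpow_add₀ natCast_prime_ne_zero]
      congr 1
      push_cast
      ring
    rw [_root_.zpow_neg _ ((max A B : ℕ) : ℤ), zpow_natCast, ← _root_.inv_pow]
    linear_combination stratumConst p * sphereCard p A * sphereCard p B *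
      (∑ M ∈ Finset.Ico (max A B) k, (p : ℝ)⁻¹ ^ M) * hexp

lemma measure_stratum (hμ : μ (intCubes p) = 1) (hodd : Odd p) {D : ℚ_[p]} (hD : ‖D‖ = 1)
    (hDs : ¬ IsSquare D) (n A B : ℕ) :
    μ (stratum D n (n - A) (n - B)) =
      ENNReal.ofReal (stratumConst p * ((p : ℝ)⁻¹ ^ 3) ^ n *
        (sphereCard p A * sphereCard p B * ∑ M ∈ Finset.Icc (max A B) n, (p : ℝ)⁻¹ ^ M)) := by
  have h := measure_stratum_sub_one hμ hodd hD hDs (n + 1) A B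
  rw [Nat.cast_succ, add_sub_cancel_right] at h
  rw [h, ← pow_mul, inv_pow, _root_.zpow_neg]
  norm_cast

end StratumRecursion

section LinearRecurrence

variable {R : Type*} [CommRing R]

lemma tsum_mul_of_third_order_recurrence [TopologicalSpace R] [IsTopologicalRing R] [T2Space R]
    {a : ℕ → R} (ha : Summable a) {r s t : R}
    (hrec : ∀ n, a (n + 3) = r * a (n + 2) + s * a (n + 1) + t * a n) :
    (1 - r - s - t) * ∑' n, a n = a 0 + a 1 + a 2 - r * (a 0 + a 1) - s * a 0 := by
  have shift (k : ℕ) := ha.sum_add_tsum_nat_add k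
  have h1 := (summable_nat_add_iff 1).2 ha
  have h2 := (summable_nat_add_iff 2).2 ha
  have hsum : ∑' n, a (n + 3) = r * ∑' n, a (n + 2) + s * ∑' n, a (n + 1) + t * ∑' n, a n := by
    rw [tsum_congr hrec, ((h2.mul_left r).add (h1.mul_left s)).tsum_add (ha.mul_left t),
      (h2.mul_left r).tsum_add (h1.mul_left s), h2.tsum_mul_left, h1.tsum_mul_left,
      ha.tsum_mul_left]
  have e1 := shift 1
  have e2 := shift 2
  have e3 := shift 3
  simp only [Finset.sum_range_succ, Finset.sum_range_zero, zero_add] at e1 e2 e3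
  linear_combination r * e2 + s * e1 - e3 + hsum

lemma sq_third_order_recurrence {u : ℕ → R} {a b : R}
    (hrec : ∀ n, u (n + 2) = a * u (n + 1) - b * u n) (n : ℕ) :
    u (n + 3) ^ 2 =
      (a ^ 2 - b) * u (n + 2) ^ 2 - b * (a ^ 2 - b) * u (n + 1) ^ 2 + b ^ 3 * u n ^ 2 := by
  rw [hrec (n + 1), hrec n]
  ring

lemma tsum_pow_mul_sq_of_recurrence [TopologicalSpace R] [IsTopologicalRing R] [T2Space R]
    {u : ℕ → R} {a b x : R} (hrec : ∀ n, u (n + 2) = a * u (n + 1) - b * u n)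
    (hsum : Summable fun n => x ^ n * u n ^ 2) :
    (1 - (a ^ 2 - b) * x + b * (a ^ 2 - b) * x ^ 2 - b ^ 3 * x ^ 3) * ∑' n, x ^ n * u n ^ 2 =
      u 0 ^ 2 + (u 1 ^ 2 - (a ^ 2 - b) * u 0 ^ 2) * x + b * (u 1 - a * u 0) ^ 2 * x ^ 2 := by
  have h := tsum_mul_of_third_order_recurrence hsum (r := (a ^ 2 - b) * x)
    (s := -(b * (a ^ 2 - b) * x ^ 2)) (t := b ^ 3 * x ^ 3) fun n => by
      rw [sq_third_order_recurrence hrec]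
      ring
  rw [hrec 0] at h
  linear_combination h

end LinearRecurrence

section SphericalSeries

/-- The normalized spherical function with Hecke parameter `lam` on the `(p + 1)`-regular tree, as
a function of the distance from the base vertex. -/
structure IsSphericalFunction (p : ℕ) (lam : ℝ) (b : ℕ → ℝ) : Prop where
  zero : b 0 = 1
  one : b 1 = lam / (p + 1)
  recurrence : ∀ k, p * b (k + 2) - lam * b (k + 1) + b k = 0

/-- The sum over the ball of radius `M` of the radial function `b` on the `(p + 1)`-regular
tree. -/
noncomputable def ballSum (p : ℕ) (b : ℕ → ℝ) (M : ℕ) : ℝ :=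
  ∑ l ∈ Finset.range (M + 1), sphereCard p l * b l

lemma ballSum_succ (p : ℕ) (b : ℕ → ℝ) (M : ℕ) :
    ballSum p b (M + 1) = ballSum p b M + sphereCard p (M + 1) * b (M + 1) :=
  Finset.sum_range_succ _ _

lemma ballSum_zero (p : ℕ) (b : ℕ → ℝ) : ballSum p b 0 = b 0 := by
  rw [ballSum, zero_add, Finset.sum_range_one, sphereCard, if_pos rfl, one_mul]

lemma sphereCard_succ (p l : ℕ) : sphereCard p (l + 1) = (p : ℝ) ^ l * (p + 1) := by
  rw [sphereCard, if_neg l.succ_ne_zero, Nat.add_sub_cancel, pow_succ]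
  ring

namespace IsSphericalFunction

variable {lam : ℝ} {b : ℕ → ℝ}

lemma ballSum_one {p : ℕ} (hb : IsSphericalFunction p lam b) : ballSum p b 1 = 1 + lam := by
  have hp : (p : ℝ) + 1 ≠ 0 := by positivity
  rw [ballSum_succ, ballSum_zero, hb.zero, sphereCard_succ, hb.one, pow_zero, one_mul,
    mul_div_cancel₀ _ hp]

lemma ballSum_add_two {p : ℕ} (hb : IsSphericalFunction p lam b) (M : ℕ) :
    ballSum p b (M + 2) = lam * ballSum p b (M + 1) - p * ballSum p b M := by
  induction M with
  | zero =>
    rw [ballSum_succ, hb.ballSum_one, ballSum_zero, hb.zero, sphereCard_succ]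
    have h1 : ((p : ℝ) + 1) * b 1 = lam := by
      rw [hb.one]
      exact mul_div_cancel₀ _ (by positivity)
    have h2 := hb.recurrence 0
    rw [hb.zero] at h2
    linear_combination (p + 1) * h2 + lam * h1
  | succ M ih =>
    rw [ballSum_succ p b (M + 2), sphereCard_succ]
    have h1 := ballSum_succ p b (M + 1)
    have h2 := ballSum_succ p b M
    rw [sphereCard_succ] at h1 h2
    linear_combination ih + (p : ℝ) ^ (M + 1) * (p + 1) * hb.recurrence (M + 1) - lam * h1 + p * h2

lemma abs_le_pow (hb : IsSphericalFunction p lam b) (l : ℕ) : |b l| ≤ (1 + |lam|) ^ l := by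
  have hp : (1 : ℝ) ≤ p := one_lt_natCast_prime.le
  have hlam := abs_nonneg lam
  induction l using Nat.twoStepInduction with
  | zero => rw [hb.zero, abs_one, pow_zero]
  | one =>
    have hp1 : (1 : ℝ) ≤ p + 1 := le_add_of_nonneg_left (zero_le_one.trans hp)
    rw [hb.one, abs_div, abs_of_pos (zero_lt_one.trans_le hp1), pow_one]
    exact (div_le_self hlam hp1).trans (le_add_of_nonneg_left zero_le_one)
  | more k h0 h1 =>
    have hpow : (1 + |lam|) ^ k ≤ (1 + |lam|) ^ (k + 1) :=
      pow_le_pow_right₀ (by linarith) k.le_succ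
    calc |b (k + 2)| ≤ p * |b (k + 2)| := le_mul_of_one_le_left (abs_nonneg _) hp
      _ = |p * b (k + 2)| := by rw [abs_mul, Nat.abs_cast]
      _ = |lam * b (k + 1) - b k| :=
        congrArg abs (by linear_combination hb.recurrence k)
      _ ≤ |lam| * |b (k + 1)| + |b k| := (abs_sub _ _).trans_eq (by rw [abs_mul])
      _ ≤ |lam| * (1 + |lam|) ^ (k + 1) + (1 + |lam|) ^ (k + 1) := by
        gcongr
        exact h0.trans hpow
      _ = (1 + |lam|) ^ (k + 2) := by ring

end IsSphericalFunction

lemma sphereCard_le (l : ℕ) : sphereCard p l ≤ 2 * (p : ℝ) ^ l := by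
  have hp : (1 : ℝ) ≤ p := one_lt_natCast_prime.le
  rw [sphereCard]
  split_ifs with h
  · rw [h]
    norm_num
  · have hle : (p : ℝ) ^ (l - 1) ≤ (p : ℝ) ^ l := pow_le_pow_right₀ hp l.pred_le
    linarith

lemma abs_ballSum_le {b : ℕ → ℝ} {C : ℝ} (hC : 1 ≤ C) (hb : ∀ l, |b l| ≤ C ^ l) (M : ℕ) :
    |ballSum p b M| ≤ (3 * (p * C)) ^ M := by
  have hr : 1 ≤ p * C := one_le_mul_of_one_le_of_one_le one_lt_natCast_prime.le hC
  induction M with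
  | zero => simpa only [ballSum_zero, pow_zero] using hb 0
  | succ M ih =>
    have hterm : |sphereCard p (M + 1) * b (M + 1)| ≤ 2 * (p * C) ^ (M + 1) := by
      rw [abs_mul, abs_of_nonneg (sphereCard_nonneg _ _), mul_pow, ← mul_assoc]
      exact mul_le_mul (sphereCard_le _) (hb _) (abs_nonneg _) (by positivity)
    have hpow : (p * C) ^ M ≤ (3 * (p * C)) ^ M :=
      pow_le_pow_left₀ (by positivity) (by linarith) M
    calc |ballSum p b (M + 1)| ≤ (3 * (p * C)) ^ M + 2 * (p * C) ^ (M + 1) := by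
          rw [ballSum_succ]
          exact (abs_add_le _ _).trans (add_le_add ih hterm)
      _ ≤ p * C * (3 * (p * C)) ^ M + 2 * (p * C) * (3 * (p * C)) ^ M := by
          rw [pow_succ' (p * C : ℝ), ← mul_assoc 2]
          exact add_le_add (le_mul_of_one_le_left (by positivity) hr)
            (mul_le_mul_of_nonneg_left hpow (by positivity))
      _ = (3 * (p * C)) ^ (M + 1) := by ring

lemma summable_pow_mul_ballSum_sq {X C : ℝ} {b : ℕ → ℝ} (hX : 0 ≤ X) (hC : 1 ≤ C)
    (hXC : 9 * (p * C ^ 2) * X < 1) (hb : ∀ l, |b l| ≤ C ^ l) :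
    Summable fun M => (X / p) ^ M * ballSum p b M ^ 2 := by
  have hp := natCast_prime_pos (p := p)
  refine .of_nonneg_of_le (fun _ => by positivity) (fun M => ?_)
    (summable_geometric_of_lt_one (by positivity) hXC)
  calc (X / p) ^ M * ballSum p b M ^ 2 ≤ (X / p) ^ M * ((3 * (p * C)) ^ M) ^ 2 := by
        rw [← sq_abs]
        gcongr
        exact abs_ballSum_le hC hb M
    _ = (9 * (p * C ^ 2) * X) ^ M := by
        rw [pow_right_comm, ← mul_pow]
        congr 1
        field_simp
        ring

lemma lt_one_of_mul_sq_mul_lt_one {X C : ℝ} (hX : 0 ≤ X) (hC : 1 ≤ C)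
    (hXC : 9 * (p * C ^ 2) * X < 1) : X < 1 := by
  have hpC : 1 ≤ p * C ^ 2 :=
    one_le_mul_of_one_le_of_one_le one_lt_natCast_prime.le (one_le_pow₀ hC)
  exact (le_mul_of_one_le_left hX (by linarith)).trans_lt hXC

lemma eulerFactor_pos {X lam : ℝ} (hX : 0 ≤ X) (hXlam : 9 * (p * (1 + |lam|) ^ 2) * X < 1) :
    0 < 1 - ((p : ℝ)⁻¹ * lam ^ 2 - 1) * X + ((p : ℝ)⁻¹ * lam ^ 2 - 1) * X ^ 2 - X ^ 3 := by
  have hp : (1 : ℝ) ≤ p := one_lt_natCast_prime.le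
  have hlam := abs_nonneg lam
  have hX1 := lt_one_of_mul_sq_mul_lt_one hX (le_add_of_nonneg_right hlam) hXlam
  have hlt : (p : ℝ)⁻¹ * lam ^ 2 * X < 1 := by
    refine lt_of_le_of_lt ?_ hXlam
    rw [← sq_abs lam]
    refine mul_le_mul_of_nonneg_right ?_ hX
    calc (p : ℝ)⁻¹ * |lam| ^ 2 ≤ 1 * (1 + |lam|) ^ 2 := by
          gcongr
          · exact inv_le_one_of_one_le₀ hp
          · linarith
      _ ≤ 9 * (p * (1 + |lam|) ^ 2) := by
          rw [← mul_assoc]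
          gcongr
          linarith
  calc (0 : ℝ) < (1 - X) * ((1 - (p : ℝ)⁻¹ * lam ^ 2 * X) + 2 * X + X ^ 2) := by
        refine mul_pos (sub_pos.2 hX1) ?_
        have hquad : 0 ≤ 2 * X + X ^ 2 := by positivity
        linarith
    _ = _ := by ring

lemma IsSphericalFunction.tsum_pow_mul_ballSum_sq {X lam : ℝ} {b : ℕ → ℝ} (hX : 0 ≤ X)
    (hXlam : 9 * (p * (1 + |lam|) ^ 2) * X < 1) (hb : IsSphericalFunction p lam b) :
    ∑' M, (X / p) ^ M * ballSum p b M ^ 2 =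
      (1 - ((p : ℝ)⁻¹ * lam ^ 2 - 1) * X + ((p : ℝ)⁻¹ * lam ^ 2 - 1) * X ^ 2 - X ^ 3)⁻¹ *
        (1 + (1 + (p : ℝ)⁻¹ + X / p + 2 * (p : ℝ)⁻¹ * lam) * X) := by
  have hp := natCast_prime_ne_zero (p := p)
  have h := tsum_pow_mul_sq_of_recurrence hb.ballSum_add_two (summable_pow_mul_ballSum_sq hX
    (le_add_of_nonneg_right (abs_nonneg lam)) hXlam hb.abs_le_pow)
  rw [ballSum_zero, hb.zero, hb.ballSum_one] at h
  rw [eq_inv_mul_iff_mul_eq₀ (eulerFactor_pos hX hXlam).ne']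
  convert h using 1
  · congr 1
    field_simp
  · field_simp
    ring

end SphericalSeries

section StratumSeries

lemma sum_mul_mul_sum_Icc_max {R : Type*} [CommSemiring R] (f c : ℕ → R) (n : ℕ) :
    ∑ t ∈ Finset.range (n + 1) ×ˢ Finset.range (n + 1),
        f t.1 * f t.2 * ∑ M ∈ Finset.Icc (max t.1 t.2) n, c M =
      ∑ M ∈ Finset.range (n + 1), c M * (∑ l ∈ Finset.range (M + 1), f l) ^ 2 := by
  simp only [Finset.mul_sum]
  rw [Finset.sum_comm' (t' := Finset.range (n + 1))
    (s' := fun M => Finset.range (M + 1) ×ˢ Finset.range (M + 1))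
    (fun t M => by simp only [Finset.mem_product, Finset.mem_range, Finset.mem_Icc]; omega)]
  refine Finset.sum_congr rfl fun M _ => ?_
  rw [sq, Finset.sum_mul_sum, ← Finset.sum_product', Finset.mul_sum]
  exact Finset.sum_congr rfl fun t _ => mul_comm _ _

/-- The volume of the stratum of index `(n, A, B)` multiplied by `b A * b B * (p ^ 3 * X) ^ n`. -/
noncomputable def stratumTerm (p : ℕ) (X : ℝ) (b : ℕ → ℝ) (t : ℕ × ℕ × ℕ) : ℝ :=
  stratumConst p * X ^ t.1 * (sphereCard p t.2.1 * b t.2.1 * (sphereCard p t.2.2 * b t.2.2) *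
    ∑ M ∈ Finset.Icc (max t.2.1 t.2.2) t.1, (p : ℝ)⁻¹ ^ M)

lemma hasSum_stratumTerm_fiber (p : ℕ) (X : ℝ) (b : ℕ → ℝ) (n : ℕ) :
    HasSum (fun t => stratumTerm p X b (n, t)) (stratumConst p *
      ∑ M ∈ Finset.range (n + 1), (X / p) ^ M * ballSum p b M ^ 2 * X ^ (n - M)) := by
  have hsupp : ∀ t ∉ Finset.range (n + 1) ×ˢ Finset.range (n + 1),
      stratumTerm p X b (n, t) = 0 := by
    intro t ht
    rw [Finset.mem_product, Finset.mem_range, Finset.mem_range] at ht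
    rw [stratumTerm, Finset.Icc_eq_empty (by dsimp only; omega), Finset.sum_empty, mul_zero,
      mul_zero]
  have hfin : HasSum _ _ := hasSum_sum_of_ne_finset_zero hsupp
  convert hfin using 1
  dsimp only [stratumTerm]
  rw [← Finset.mul_sum, sum_mul_mul_sum_Icc_max (fun l => sphereCard p l * b l), mul_assoc,
    Finset.mul_sum _ _ (X ^ n)]
  refine congrArg _ (Finset.sum_congr rfl fun M hM => ?_)
  obtain ⟨k, rfl⟩ := Nat.exists_eq_add_of_le (Nat.lt_succ_iff.1 (Finset.mem_range.1 hM))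
  rw [Nat.add_sub_cancel_left, div_eq_mul_inv, mul_pow, pow_add]
  change _ = _ * (_ * ballSum p b M ^ 2)
  ring

lemma norm_stratumTerm {X : ℝ} (hX : 0 ≤ X) (b : ℕ → ℝ) (t : ℕ × ℕ × ℕ) :
    ‖stratumTerm p X b t‖ = stratumTerm p X (fun l => |b l|) t := by
  have hC := stratumConst_pos (p := p)
  have h0 := sphereCard_nonneg p
  have hsum : 0 ≤ ∑ M ∈ Finset.Icc (max t.2.1 t.2.2) t.1, (p : ℝ)⁻¹ ^ M := by positivity
  simp only [stratumTerm, Real.norm_eq_abs, abs_mul, abs_of_pos hC, abs_of_nonneg (h0 _),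
    abs_of_nonneg (pow_nonneg hX _), abs_of_nonneg hsum]

lemma summable_norm_stratumTerm {X C : ℝ} {b : ℕ → ℝ} (hX : 0 ≤ X) (hC : 1 ≤ C)
    (hXC : 9 * (p * C ^ 2) * X < 1) (hb : ∀ l, |b l| ≤ C ^ l) :
    Summable fun t => ‖stratumTerm p X b t‖ := by
  have hball := summable_pow_mul_ballSum_sq (b := fun l => |b l|) hX hC hXC
    (by simpa only [abs_abs])
  rw [summable_prod_of_nonneg fun _ => norm_nonneg _]
  simp only [norm_stratumTerm hX, (hasSum_stratumTerm_fiber p X _ _).tsum_eq]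
  exact ⟨fun n => (hasSum_stratumTerm_fiber p X _ n).summable, Summable.mul_left _
    (summable_norm_sum_mul_range_of_summable_norm hball.norm
      (summable_geometric_of_lt_one hX (lt_one_of_mul_sq_mul_lt_one hX hC hXC)).norm).of_norm⟩

lemma tsum_stratumTerm {X C : ℝ} {b : ℕ → ℝ} (hX : 0 ≤ X) (hC : 1 ≤ C)
    (hXC : 9 * (p * C ^ 2) * X < 1) (hb : ∀ l, |b l| ≤ C ^ l) :
    ∑' t, stratumTerm p X b t =
      stratumConst p * ((1 - X)⁻¹ * ∑' M, (X / p) ^ M * ballSum p b M ^ 2) := by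
  have hX1 := lt_one_of_mul_sq_mul_lt_one hX hC hXC
  rw [(summable_norm_stratumTerm hX hC hXC hb).of_norm.tsum_prod]
  simp only [(hasSum_stratumTerm_fiber p X b _).tsum_eq]
  rw [tsum_mul_left, ← tsum_mul_tsum_eq_tsum_sum_range_of_summable_norm
    (summable_pow_mul_ballSum_sq hX hC hXC hb).norm (summable_geometric_of_lt_one hX hX1).norm,
    tsum_geometric_of_lt_one hX hX1, mul_comm (1 - X)⁻¹]

end StratumSeries

section ZetaIntegral

lemma mcoord_nonneg (t : ℚ_[p] × ℚ_[p] × ℚ_[p]) : 0 ≤ mcoord t :=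
  (norm_nonneg _).trans (mcoord_le_iff.1 le_rfl).1

lemma norm_discrim_le_mcoord_sq (hodd : Odd p) (t : ℚ_[p] × ℚ_[p] × ℚ_[p]) :
    ‖t.2.1 ^ 2 - 4 * t.1 * t.2.2‖ ≤ mcoord t ^ 2 := by
  obtain ⟨h1, h2, h3⟩ := mcoord_le_iff.1 (le_refl (mcoord t))
  rw [sub_eq_add_neg]
  refine (Padic.nonarchimedean _ _).trans (max_le ?_ ?_)
  · rw [norm_pow]
    gcongr
  · rw [norm_neg, norm_mul, norm_mul, norm_four hodd, one_mul, sq]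
    exact mul_le_mul h1 h3 (norm_nonneg _) (mcoord_nonneg t)

lemma exists_mcoord_eq_zpow {t : ℚ_[p] × ℚ_[p] × ℚ_[p]} (ht : mcoord t ≠ 0) :
    ∃ k : ℤ, mcoord t = (p : ℝ) ^ (-k) := by
  obtain ⟨c, hc⟩ : ∃ c : ℚ_[p], mcoord t = ‖c‖ := by
    rcases max_choice (max ‖t.1‖ ‖t.2.1‖) ‖t.2.2‖ with h | h
    · rcases max_choice ‖t.1‖ ‖t.2.1‖ with h' | h' <;> exact ⟨_, h.trans h'⟩
    · exact ⟨_, h⟩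
  exact ⟨c.valuation, by rw [hc, Padic.norm_eq_zpow_neg_valuation (norm_ne_zero_iff.1 (hc ▸ ht))]⟩

lemma exists_level (hodd : Odd p) {t : ℚ_[p] × ℚ_[p] × ℚ_[p]} {n : ℤ}
    (ht : ‖t.2.1 ^ 2 - 4 * t.1 * t.2.2‖ = ((p : ℝ) ^ (-n)) ^ 2) :
    ∃ l : ℕ, mcoord t = (p : ℝ) ^ (-(n - l)) := by
  have hpos : (0 : ℝ) < (p : ℝ) ^ (-n) := zpow_pos natCast_prime_pos _
  have hle : (p : ℝ) ^ (-n) ≤ mcoord t := by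
    rw [← pow_le_pow_iff_left₀ hpos.le (mcoord_nonneg t) two_ne_zero, ← ht]
    exact norm_discrim_le_mcoord_sq hodd t
  obtain ⟨k, hk⟩ := exists_mcoord_eq_zpow (hpos.trans_le hle).ne'
  rw [hk, zpow_neg_le_zpow_neg_iff] at hle
  exact ⟨(n - k).toNat, by rw [hk, Int.toNat_of_nonneg (sub_nonneg.2 hle), sub_sub_cancel]⟩

lemma Vd_eq_iUnion_stratum (hodd : Odd p) {d : ℤ_[p]} (hd : ‖(d : ℚ_[p])‖ = 1) :
    Vd p d = ⋃ t : ℕ × ℕ × ℕ, stratum (d : ℚ_[p]) t.1 (t.1 - t.2.1) (t.1 - t.2.2) := by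
  ext v
  rw [mem_iUnion]
  constructor
  · rintro ⟨hv1, hv2, c, hc, hP⟩
    have hshell : Pq v ∈ sqShell (d : ℚ_[p]) c.valuation :=
      mem_sqShell_iff.2 ⟨c, Padic.norm_eq_zpow_neg_valuation hc, hP.symm⟩
    have hnorm := norm_of_mem_sqShell hd hshell
    obtain ⟨A, hA⟩ := exists_level hodd (Pq_eq_discrim_Fmap1 v ▸ hnorm)
    obtain ⟨B, hB⟩ := exists_level hodd (Pq_eq_discrim_Fmap2 v ▸ hnorm)
    have hmem : v ∈ stratum (d : ℚ_[p]) c.valuation (c.valuation - A) (c.valuation - B) :=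
      ⟨⟨hv1, hv2⟩, hshell, hA, hB⟩
    have hn : 0 ≤ c.valuation := by
      by_contra hneg
      rw [stratum_eq_empty (by omega)] at hmem
      exact hmem
    obtain ⟨n, hn⟩ := Int.eq_ofNat_of_zero_le hn
    exact ⟨(n, A, B), hn ▸ hmem⟩
  · rintro ⟨t, ⟨hv1, hv2⟩, hP, -, -⟩
    obtain ⟨c, hc, hP⟩ := mem_sqShell_iff.1 hP
    refine ⟨hv1, hv2, c, norm_ne_zero_iff.1 ?_, hP.symm⟩
    rw [hc]
    exact zpow_ne_zero _ natCast_prime_ne_zero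

lemma zpow_neg_sq_inj_iff {a b : ℤ} :
    ((p : ℝ) ^ (-a)) ^ 2 = ((p : ℝ) ^ (-b)) ^ 2 ↔ a = b := by
  have hpos (k : ℤ) : (0 : ℝ) ≤ (p : ℝ) ^ k := by positivity
  rw [pow_left_inj₀ (hpos _) (hpos _) two_ne_zero, zpow_neg_inj_iff]

lemma pairwise_disjoint_stratum {D : ℚ_[p]} (hD : ‖D‖ = 1) :
    Pairwise (Function.onFun Disjoint
      fun t : ℕ × ℕ × ℕ => stratum D t.1 (t.1 - t.2.1) (t.1 - t.2.2)) := by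
  rintro ⟨n, A, B⟩ ⟨n', A', B'⟩ hne
  refine Set.disjoint_left.2 fun v ⟨_, hP, h1, h2⟩ ⟨_, hP', h1', h2'⟩ => hne ?_
  have hn := zpow_neg_sq_inj_iff.1
    ((norm_of_mem_sqShell hD hP).symm.trans (norm_of_mem_sqShell hD hP'))
  have hA := zpow_neg_inj_iff.1 (h1.symm.trans h1')
  have hB := zpow_neg_inj_iff.1 (h2.symm.trans h2')
  dsimp only at hn hA hB
  simp only [Prod.mk.injEq]
  omega

lemma level_eq_iff {n : ℤ} {A l : ℕ} :
    ((p : ℝ) ^ (-(n - A))) ^ 2 = ((p : ℝ) ^ (-n)) ^ 2 * (p : ℝ) ^ (2 * l) ↔ l = A := by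
  have h : ((p : ℝ) ^ (-n)) ^ 2 * (p : ℝ) ^ (2 * l) = ((p : ℝ) ^ (-(n - l))) ^ 2 := by
    rw [pow_mul', ← mul_pow, ← zpow_natCast (p : ℝ) l, ← zpow_add₀ natCast_prime_ne_zero, neg_sub,
      neg_add_eq_sub]
  rw [h, zpow_neg_sq_inj_iff]
  omega

lemma fs_eq_of_mem_stratum {d : ℤ_[p]} (hd : ‖(d : ℚ_[p])‖ = 1) (β : ℕ → ℝ) (s : ℝ) {n A B : ℕ}
    {v : VV p} (hv : v ∈ stratum (d : ℚ_[p]) n (n - A) (n - B)) :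
    fs p d β s v = β A * β B * ((p : ℝ) ^ (4 - 2 * s)) ^ n := by
  obtain ⟨-, hP, h1, h2⟩ := hv
  have hnorm := norm_of_mem_sqShell hd hP
  have hlevel1 (l : ℕ) : ‖(d : ℚ_[p])‖ * mcoord (Fmap1 v) ^ 2 = ‖Pq v‖ * (p : ℝ) ^ (2 * l) ↔
      l = A := by
    rw [hd, one_mul, h1, hnorm, level_eq_iff]
  have hlevel2 (l : ℕ) : ‖(d : ℚ_[p])‖ * mcoord (Fmap2 v) ^ 2 = ‖Pq v‖ * (p : ℝ) ^ (2 * l) ↔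
      l = B := by
    rw [hd, one_mul, h2, hnorm, level_eq_iff]
  have hP0 : Pq v ≠ 0 := by
    rw [← norm_ne_zero_iff, hnorm]
    exact pow_ne_zero _ (zpow_ne_zero _ natCast_prime_ne_zero)
  have hdom : Pq v ≠ 0 ∧
      (∃ l : ℕ, ‖(d : ℚ_[p])‖ * mcoord (Fmap1 v) ^ 2 = ‖Pq v‖ * (p : ℝ) ^ (2 * l)) ∧
      (∃ l : ℕ, ‖(d : ℚ_[p])‖ * mcoord (Fmap2 v) ^ 2 = ‖Pq v‖ * (p : ℝ) ^ (2 * l)) :=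
    ⟨hP0, ⟨A, (hlevel1 A).2 rfl⟩, ⟨B, (hlevel2 B).2 rfl⟩⟩
  rw [fs, dif_pos hdom, (hlevel1 _).1 hdom.2.1.choose_spec, (hlevel2 _).1 hdom.2.2.choose_spec,
    hnorm]
  congr 1
  have hp0 : (0 : ℝ) ≤ p := p.cast_nonneg
  rw [← Real.rpow_intCast, ← Real.rpow_mul_natCast hp0, ← Real.rpow_mul_natCast hp0,
    ← Real.rpow_mul hp0]
  congr 1
  push_cast
  ring

variable {μ : Measure (VV p)} [μ.IsAddHaarMeasure]

lemma measureReal_stratum_mul (hμ : μ (intCubes p) = 1) (hodd : Odd p) {D : ℚ_[p]} (hD : ‖D‖ = 1)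
    (hDs : ¬ IsSquare D) (b : ℕ → ℝ) (s : ℝ) (n A B : ℕ) :
    μ.real (stratum D n (n - A) (n - B)) * (b A * b B * ((p : ℝ) ^ (4 - 2 * s)) ^ n) =
      stratumTerm p ((p : ℝ) ^ (1 - 2 * s)) b (n, A, B) := by
  have hC := stratumConst_pos (p := p)
  have hA := sphereCard_nonneg p A
  have hB := sphereCard_nonneg p B
  have hpow : (p : ℝ) ^ (1 - 2 * s) = (p : ℝ)⁻¹ ^ 3 * (p : ℝ) ^ (4 - 2 * s) := by
    have h := Real.rpow_sub_natCast (natCast_prime_ne_zero (p := p)) (4 - 2 * s) 3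
    rw [_root_.inv_pow, inv_mul_eq_div, ← h]
    congr 1
    push_cast
    ring
  rw [measureReal_def, measure_stratum hμ hodd hD hDs, ENNReal.toReal_ofReal (by positivity),
    stratumTerm, hpow, mul_pow]
  ring

lemma integrableOn_fs_stratum (hμ : μ (intCubes p) = 1) (hodd : Odd p) {d : ℤ_[p]}
    (hd : ‖(d : ℚ_[p])‖ = 1) (hds : ¬ IsSquare (d : ℚ_[p])) (β : ℕ → ℝ) (s : ℝ) (n A B : ℕ) :
    IntegrableOn (fs p d β s) (stratum (d : ℚ_[p]) n (n - A) (n - B)) μ := by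
  rw [integrableOn_congr_fun (fun v hv => fs_eq_of_mem_stratum hd β s hv)
    (measurableSet_stratum _ _ _ _)]
  exact integrableOn_const (by rw [measure_stratum hμ hodd hd hds]; exact ENNReal.ofReal_ne_top)

lemma setIntegral_fs_stratum (hμ : μ (intCubes p) = 1) (hodd : Odd p) {d : ℤ_[p]}
    (hd : ‖(d : ℚ_[p])‖ = 1) (hds : ¬ IsSquare (d : ℚ_[p])) (β : ℕ → ℝ) (s : ℝ) (n A B : ℕ) :
    ∫ v in stratum (d : ℚ_[p]) n (n - A) (n - B), fs p d β s v ∂μ =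
      stratumTerm p ((p : ℝ) ^ (1 - 2 * s)) β (n, A, B) := by
  rw [setIntegral_congr_fun (measurableSet_stratum _ _ _ _)
    (fun v hv => fs_eq_of_mem_stratum hd β s hv), setIntegral_const, smul_eq_mul,
    measureReal_stratum_mul hμ hodd hd hds]

lemma setIntegral_norm_fs_stratum (hμ : μ (intCubes p) = 1) (hodd : Odd p) {d : ℤ_[p]}
    (hd : ‖(d : ℚ_[p])‖ = 1) (hds : ¬ IsSquare (d : ℚ_[p])) (β : ℕ → ℝ) (s : ℝ) (n A B : ℕ) :
    ∫ v in stratum (d : ℚ_[p]) n (n - A) (n - B), ‖fs p d β s v‖ ∂μ =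
      ‖stratumTerm p ((p : ℝ) ^ (1 - 2 * s)) β (n, A, B)‖ := by
  rw [setIntegral_congr_fun (measurableSet_stratum _ _ _ _)
    (fun v hv => congrArg norm (fs_eq_of_mem_stratum hd β s hv)), setIntegral_const,
    ← measureReal_stratum_mul hμ hodd hd hds, smul_eq_mul, norm_mul (μ.real _),
    Real.norm_of_nonneg measureReal_nonneg]

lemma integrableOn_fs_Vd (hμ : μ (intCubes p) = 1) (hodd : Odd p) {d : ℤ_[p]}
    (hd : ‖(d : ℚ_[p])‖ = 1) (hds : ¬ IsSquare (d : ℚ_[p])) {β : ℕ → ℝ} {s : ℝ}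
    (hsum : Summable fun t => ‖stratumTerm p ((p : ℝ) ^ (1 - 2 * s)) β t‖) :
    IntegrableOn (fs p d β s) (Vd p d) μ := by
  rw [Vd_eq_iUnion_stratum hodd hd]
  exact integrableOn_iUnion_of_summable_integral_norm
    (fun t => integrableOn_fs_stratum hμ hodd hd hds β s t.1 t.2.1 t.2.2)
    (by simpa only [setIntegral_norm_fs_stratum hμ hodd hd hds] using hsum)

lemma setIntegral_fs_Vd (hμ : μ (intCubes p) = 1) (hodd : Odd p) {d : ℤ_[p]}
    (hd : ‖(d : ℚ_[p])‖ = 1) (hds : ¬ IsSquare (d : ℚ_[p])) {β : ℕ → ℝ} {s : ℝ}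
    (hint : IntegrableOn (fs p d β s) (Vd p d) μ) :
    ∫ v in Vd p d, fs p d β s v ∂μ = ∑' t, stratumTerm p ((p : ℝ) ^ (1 - 2 * s)) β t := by
  rw [Vd_eq_iUnion_stratum hodd hd] at hint ⊢
  rw [integral_iUnion (fun t => measurableSet_stratum _ _ _ _) (pairwise_disjoint_stratum hd) hint]
  simp only [setIntegral_fs_stratum hμ hodd hd hds]

lemma exists_forall_mul_rpow_lt_one {x : ℝ} (hx : 1 < x) (K : ℝ) :
    ∃ s₀ : ℝ, ∀ s > s₀, K * x ^ (1 - 2 * s) < 1 := by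
  have hexp : Filter.Tendsto (fun s : ℝ => 1 - 2 * s) Filter.atTop Filter.atBot :=
    Filter.tendsto_atBot_add_const_left _ 1
      (Filter.tendsto_neg_atTop_atBot.comp (Filter.tendsto_id.const_mul_atTop two_pos))
  have hlim := ((tendsto_rpow_atBot_of_base_gt_one x hx).comp hexp).const_mul K
  rw [mul_zero] at hlim
  obtain ⟨s₀, hs₀⟩ := Filter.eventually_atTop.1 (hlim.eventually_lt_const one_pos)
  exact ⟨s₀, fun s hs => hs₀ s hs.le⟩

lemma rpow_two_sub_four_mul {x : ℝ} (hx : 0 ≤ x) (s : ℝ) :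
    x ^ (2 - 4 * s) = (x ^ (1 - 2 * s)) ^ 2 := by
  rw [← Real.rpow_mul_natCast hx]
  congr 1
  push_cast
  ring

lemma rpow_three_sub_six_mul {x : ℝ} (hx : 0 ≤ x) (s : ℝ) :
    x ^ (3 - 6 * s) = (x ^ (1 - 2 * s)) ^ 3 := by
  rw [← Real.rpow_mul_natCast hx]
  congr 1
  push_cast
  ring

lemma rpow_neg_two_mul {x : ℝ} (hx : x ≠ 0) (s : ℝ) : x ^ (-(2 * s)) = x ^ (1 - 2 * s) / x := by
  rw [← Real.rpow_sub_one hx]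
  congr 1
  ring

lemma stratumConst_eq (p : ℕ) :
    stratumConst p =
      1 / 2 * ((1 + (p : ℝ)⁻¹)⁻¹) ^ 2 * (1 - (p : ℝ)⁻¹) * (1 - (p : ℝ)⁻¹ ^ 2) ^ 3 := by
  have h : 1 + (p : ℝ)⁻¹ ≠ 0 := by positivity
  have hfac : 1 - (p : ℝ)⁻¹ ^ 2 = (1 - (p : ℝ)⁻¹) * (1 + (p : ℝ)⁻¹) := by ring
  rw [stratumConst, hfac]
  generalize (p : ℝ)⁻¹ = x at *
  field_simp

end ZetaIntegral

end CubeZeta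

open CubeZeta in
theorem stmt18_general (p : ℕ) [Fact p.Prime] (hp : Odd p) (lam : ℝ) (d : ℤ_[p])
    (hd : IsUnit d ∧ ¬ ∃ c : ℚ_[p], (d : ℚ_[p]) = c ^ 2)
    (β : ℕ → ℝ) (hβ0 : β 0 = 1) (hβ1 : β 1 = lam / (p + 1))
    (hrec : ∀ k : ℕ, p * β (k + 2) - lam * β (k + 1) + β k = 0)
    (μ : Measure (VV p)) [μ.IsAddHaarMeasure]
    (hμ : μ {v : VV p | (∀ i j, ‖v.1 i j‖ ≤ 1) ∧ (∀ i j, ‖v.2 i j‖ ≤ 1)} = 1) :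
    ∃ s₀ : ℝ, ∀ s : ℝ, s₀ < s →
      IntegrableOn (fs p d β s) (Vd p d) μ ∧
      ∫ v in Vd p d, fs p d β s v ∂μ =
        (1 / 2) * ((1 + (p : ℝ)⁻¹)⁻¹) ^ 2 * (1 - (p : ℝ)⁻¹) * (1 - (p : ℝ)⁻¹ ^ 2) ^ 3 *
          (1 - (p : ℝ) ^ (1 - 2 * s))⁻¹ *
          (1 - ((p : ℝ)⁻¹ * lam ^ 2 - 1) * (p : ℝ) ^ (1 - 2 * s) +
              ((p : ℝ)⁻¹ * lam ^ 2 - 1) * (p : ℝ) ^ (2 - 4 * s) - (p : ℝ) ^ (3 - 6 * s))⁻¹ *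
          (1 + (1 + (p : ℝ)⁻¹ + (p : ℝ) ^ (-(2 * s)) + 2 * (p : ℝ)⁻¹ * lam) *
            (p : ℝ) ^ (1 - 2 * s)) := by
  have hunit : ‖(d : ℚ_[p])‖ = 1 := by simpa using PadicInt.isUnit_iff.1 hd.1
  have hds : ¬ IsSquare (d : ℚ_[p]) := mt (isSquare_iff_exists_sq _).1 hd.2
  have hβ : IsSphericalFunction p lam β := ⟨hβ0, hβ1, hrec⟩
  have hlam : 1 ≤ 1 + |lam| := le_add_of_nonneg_right (abs_nonneg lam)
  obtain ⟨s₀, hs₀⟩ := exists_forall_mul_rpow_lt_one (one_lt_natCast_prime (p := p))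
    (9 * (p * (1 + |lam|) ^ 2))
  refine ⟨s₀, fun s hs => ?_⟩
  have hX : 0 ≤ (p : ℝ) ^ (1 - 2 * s) := by positivity
  have hint := integrableOn_fs_Vd hμ hp hunit hds
    (summable_norm_stratumTerm hX hlam (hs₀ s hs) hβ.abs_le_pow)
  refine ⟨hint, ?_⟩
  rw [setIntegral_fs_Vd hμ hp hunit hds hint, tsum_stratumTerm hX hlam (hs₀ s hs) hβ.abs_le_pow,
    hβ.tsum_pow_mul_ballSum_sq hX (hs₀ s hs), stratumConst_eq,
    rpow_two_sub_four_mul p.cast_nonneg, rpow_three_sub_six_mul p.cast_nonneg,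
    rpow_neg_two_mul natCast_prime_ne_zero]
  ring

/-- the inert unramified case (`d ∈ ℤ_pˣ` a nonsquare in `ℚ_p`): explicit
value of the local zeta integral `∫_{V_d(ℤ_p)} f_s`. -/
theorem stmt18 (p : ℕ) [Fact p.Prime] (hp : Odd p) (q lam : ℝ) (hq : q = p)
    (hlam : |lam| ≤ q + 1)
    (d : ℤ_[p]) (hdval : ‖(d : ℚ_[p])‖ = 1 ∨ ‖(d : ℚ_[p])‖ = (p : ℝ)⁻¹)
    (hd : IsUnit d ∧ ¬ ∃ c : ℚ_[p], (d : ℚ_[p]) = c ^ 2)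
    (β : ℕ → ℝ) (hβ0 : β 0 = 1) (hβ1 : β 1 = lam / (q + 1))
    (hrec : ∀ k : ℕ, q * β (k + 2) - lam * β (k + 1) + β k = 0)
    (μ : Measure (VV p)) [μ.IsAddHaarMeasure]
    (hμ : μ {v : VV p | (∀ i j, ‖v.1 i j‖ ≤ 1) ∧ (∀ i j, ‖v.2 i j‖ ≤ 1)} = 1) :
    ∃ s₀ : ℝ, ∀ s : ℝ, s₀ < s →
      IntegrableOn (fs p d β s) (Vd p d) μ ∧
      ∫ v in Vd p d, fs p d β s v ∂μ =
        (1 / 2) * ((1 + q⁻¹)⁻¹) ^ 2 * (1 - q⁻¹) * (1 - q⁻¹ ^ 2) ^ 3 *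
          (1 - q ^ (1 - 2 * s))⁻¹ *
          (1 - (q⁻¹ * lam ^ 2 - 1) * q ^ (1 - 2 * s) +
              (q⁻¹ * lam ^ 2 - 1) * q ^ (2 - 4 * s) - q ^ (3 - 6 * s))⁻¹ *
          (1 + (1 + q⁻¹ + q ^ (-(2 * s)) + 2 * q⁻¹ * lam) * q ^ (1 - 2 * s)) := by
  subst hq
  exact stmt18_general p hp lam d hd β hβ0 hβ1 hrec μ hμ
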